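/- arXiv:1207.3632 — 7 statements merged into one kernel-verified Lean document; each statement's English description precedes it below -/
import Mathlib

section
/- Node count via Prüfer angles: Let u be a solution of τu = zu with Prüfer variables ρ_u, θ_u. Then for all integers m < n, #_{(m,n)}(u) = ⌈θ_u(n)/π⌉ − ⌊θ_u(m)/π⌋ − 1. -/
/-!
The angle `θ n` lies in `((k - 1)π, kπ]` with `k = ⌈θ n / π⌉`, so the parity of `k` records the
sign of `u n` if `u n ≠ 0`, and that of `u (n + 1)` if `u n = 0` (`prufer_sign`). The ceiling grows
by `0` or `1` at each step, hence its increment is determined by its parity, and comparing signs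
shows that it is `1` exactly at the nodes (`ceil_step`). The one case that uses the difference
equation is `u (n + 1) = 0`, where `u n` and `u (n + 2)` must have opposite signs.
Summing gives the number of nodes in `[m, n)` as `⌈θ n / π⌉ - ⌈θ m / π⌉` (`ceil_telescope`);
the node convention at `m` accounts for `⌈θ m / π⌉ - ⌊θ m / π⌋ - 1`, which is `-1` if `u m = 0`
and `0` otherwise.
-/

open Real

noncomputable section

/-- The Jacobi difference expression `(τ u)(n) = a(n)u(n+1) + a(n-1)u(n-1) + b(n)u(n)`. -/
def jTau (a b : ℤ → ℝ) (u : ℤ → ℝ) (n : ℤ) : ℝ :=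
  a n * u (n + 1) + a (n - 1) * u (n - 1) + b n * u n

/-- `u` is a solution of `τ u = z u`: not identically zero and satisfying the recursion. -/
def IsJSolution (a b : ℤ → ℝ) (z : ℝ) (u : ℤ → ℝ) : Prop :=
  u ≠ 0 ∧ ∀ n : ℤ, jTau a b u n = z * u n

/-- The (N-1)×(N-1) Jacobi matrix with diagonal b(1),…,b(N-1) and
off-diagonal a(1),…,a(N-2). -/
def jMatrix (N : ℕ) (a b : ℤ → ℝ) : Matrix (Fin (N - 1)) (Fin (N - 1)) ℝ :=
  fun i j =>
    if (i : ℕ) = (j : ℕ) then b (((i : ℕ) : ℤ) + 1)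
    else if (i : ℕ) + 1 = (j : ℕ) then a (((i : ℕ) : ℤ) + 1)
    else if (j : ℕ) + 1 = (i : ℕ) then a (((j : ℕ) : ℤ) + 1)
    else 0

/-- `μ` is an eigenvalue of the matrix `J`. -/
def IsEV {m : ℕ} (J : Matrix (Fin m) (Fin m) ℝ) (μ : ℝ) : Prop :=
  ∃ v : Fin m → ℝ, v ≠ 0 ∧ J.mulVec v = μ • v

/-- The number of eigenvalues of `J` in `Ω`. -/
def evCount {m : ℕ} (J : Matrix (Fin m) (Fin m) ℝ) (Ω : Set ℝ) : ℕ :=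
  {μ ∈ Ω | IsEV J μ}.ncard

/-- The (modified) Wronskian `W_n(u₀,u₁) = u₀(n)a₁(n)u₁(n+1) - u₁(n)a₀(n)u₀(n+1)`. -/
def jW (a0 a1 : ℤ → ℝ) (u0 u1 : ℤ → ℝ) (n : ℤ) : ℝ :=
  u0 n * a1 n * u1 (n + 1) - u1 n * a0 n * u0 (n + 1)

open Classical in
/-- The weighted node sign `#_n(u₀,u₁) ∈ {-1,0,1}` of the Wronskian at `n`. -/
def jSgn (a0 a1 u0 u1 : ℤ → ℝ) (n : ℤ) : ℤ :=
  if jW a0 a1 u0 u1 (n + 1) * u0 (n + 1) * u1 (n + 1) > 0 ∧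
      (jW a0 a1 u0 u1 n * jW a0 a1 u0 u1 (n + 1) < 0 ∨
        (jW a0 a1 u0 u1 n = 0 ∧ jW a0 a1 u0 u1 (n + 1) ≠ 0)) then 1
  else if jW a0 a1 u0 u1 n * u0 (n + 1) * u1 (n + 1) > 0 ∧
      (jW a0 a1 u0 u1 n * jW a0 a1 u0 u1 (n + 1) < 0 ∨
        (jW a0 a1 u0 u1 n ≠ 0 ∧ jW a0 a1 u0 u1 (n + 1) = 0)) then -1
  else 0

/-- `#_{[m,n]}(u₀,u₁) = Σ_{j=m}^{n-1} #_j(u₀,u₁)`. -/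
def cntCC (a0 a1 u0 u1 : ℤ → ℝ) (m n : ℤ) : ℤ :=
  ∑ j ∈ Finset.Ico m n, jSgn a0 a1 u0 u1 j

open Classical in
/-- `#_{(m,n]}(u₀,u₁)`. -/
def cntOC (a0 a1 u0 u1 : ℤ → ℝ) (m n : ℤ) : ℤ :=
  cntCC a0 a1 u0 u1 m n - if jW a0 a1 u0 u1 m = 0 then 1 else 0

open Classical in
/-- `#_{[m,n)}(u₀,u₁)`. -/
def cntCO (a0 a1 u0 u1 : ℤ → ℝ) (m n : ℤ) : ℤ :=
  cntCC a0 a1 u0 u1 m n + if jW a0 a1 u0 u1 n = 0 then 1 else 0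

open Classical in
/-- `#_{(m,n)}(u₀,u₁)`. -/
def cntOO (a0 a1 u0 u1 : ℤ → ℝ) (m n : ℤ) : ℤ :=
  cntCC a0 a1 u0 u1 m n - (if jW a0 a1 u0 u1 m = 0 then 1 else 0)
    + (if jW a0 a1 u0 u1 n = 0 then 1 else 0)

/-- `n` is a node of `u`: `u(n) = 0` or `a(n)u(n)u(n+1) > 0`. -/
def IsNode (a u : ℤ → ℝ) (n : ℤ) : Prop :=
  u n = 0 ∨ a n * u n * u (n + 1) > 0

open Classical in
/-- The number of nodes of `u` between `m` and `l`: nodes `n` with `m < n < l`,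
plus one if `m` is a node with `u(m) ≠ 0`. -/
def nodeCount (a u : ℤ → ℝ) (m l : ℤ) : ℕ :=
  ((Finset.Ioo m l).filter (fun n => IsNode a u n)).card +
    if IsNode a u m ∧ u m ≠ 0 then 1 else 0

/-- `ρ, θ` are Prüfer variables for `u` (w.r.t. the coefficient `a`). -/
def IsPrufer (a u ρ θ : ℤ → ℝ) : Prop :=
  ∀ n : ℤ, 0 < ρ n ∧ u n = ρ n * Real.sin (θ n) ∧
    -(a n) * u (n + 1) = ρ n * Real.cos (θ n) ∧
    ⌈θ n / π⌉ ≤ ⌈θ (n + 1) / π⌉ ∧ ⌈θ (n + 1) / π⌉ ≤ ⌈θ n / π⌉ + 1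

/-- The position of an angle in its half-open interval `((k - 1)π, kπ]`, `k = ⌈t / π⌉`. -/
lemma ceil_angle_cases (t : ℝ) :
    ((-1 : ℝ) ^ ⌈t / π⌉ * sin t < 0 ∧ ⌊t / π⌋ = ⌈t / π⌉ - 1) ∨
      (sin t = 0 ∧ 0 < (-1 : ℝ) ^ ⌈t / π⌉ * cos t ∧ ⌊t / π⌋ = ⌈t / π⌉) := by
  have hpi := Real.pi_pos
  have h1 : t / π ≤ ⌈t / π⌉ := Int.le_ceil _
  have h2 : (⌈t / π⌉ : ℝ) < t / π + 1 := Int.ceil_lt_add_one _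
  generalize hk : ⌈t / π⌉ = k at *
  have ht : t / π * π = t := div_mul_cancel₀ t hpi.ne'
  rcases h1.lt_or_eq with h | h
  · left
    constructor
    · rw [← Real.sin_sub_int_mul_pi]
      apply Real.sin_neg_of_neg_of_neg_pi_lt <;> nlinarith
    · rw [Int.floor_eq_iff]
      push_cast
      constructor <;> linarith
  · right
    rw [h] at ht
    rw [h, ← Real.cos_sub_int_mul_pi, ← ht]
    simp [Real.sin_int_mul_pi]

section

variable {a b : ℤ → ℝ} {z : ℝ} {u ρ θ : ℤ → ℝ}

lemma prufer_sign (ha : ∀ n : ℤ, a n < 0) (hp : IsPrufer a u ρ θ) (n : ℤ) :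
    ((-1 : ℝ) ^ ⌈θ n / π⌉ * u n < 0 ∧ ⌊θ n / π⌋ = ⌈θ n / π⌉ - 1) ∨
      (u n = 0 ∧ 0 < (-1 : ℝ) ^ ⌈θ n / π⌉ * u (n + 1) ∧ ⌊θ n / π⌋ = ⌈θ n / π⌉) := by
  obtain ⟨hρ, hs, hc, -, -⟩ := hp n
  have han := ha n
  rcases ceil_angle_cases (θ n) with ⟨h, hf⟩ | ⟨h, h', hf⟩
  · left
    refine ⟨?_, hf⟩
    rw [hs, mul_left_comm]
    exact mul_neg_of_pos_of_neg hρ h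
  · right
    refine ⟨by rw [hs, h, mul_zero], ?_, hf⟩
    have : 0 < -(a n) * ((-1 : ℝ) ^ ⌈θ n / π⌉ * u (n + 1)) := by
      rw [mul_left_comm, hc, mul_left_comm]
      exact mul_pos hρ h'
    exact pos_of_mul_pos_right this (by linarith)

open Classical in
lemma ceil_step (ha : ∀ n : ℤ, a n < 0) (hu : IsJSolution a b z u) (hp : IsPrufer a u ρ θ)
    (n : ℤ) : ⌈θ (n + 1) / π⌉ = ⌈θ n / π⌉ + if IsNode a u n then 1 else 0 := by
  have h0 := prufer_sign ha hp n
  have h1 := prufer_sign ha hp (n + 1)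
  obtain ⟨-, -, -, hl, hr⟩ := hp n
  have hrec := hu.2 (n + 1)
  simp only [jTau, add_sub_cancel_right] at hrec
  have han := ha n
  have han1 := ha (n + 1)
  generalize ⌈θ n / π⌉ = k at *
  generalize ⌈θ (n + 1) / π⌉ = k' at *
  have hs : (-1 : ℝ) ^ k = 1 ∨ (-1 : ℝ) ^ k = -1 := by
    rcases Int.even_or_odd k with h | h
    · exact Or.inl h.neg_one_zpow
    · exact Or.inr h.neg_one_zpow
  unfold IsNode
  rcases (by omega : k' = k ∨ k' = k + 1) with rfl | rfl
  -- Equal parities: a node at `n` would force contradictory signs.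
  · rw [if_neg, add_zero]
    rintro (h | h)
    · rcases h0 with ⟨h0, -⟩ | ⟨-, h0, -⟩
      · simp [h] at h0
      · rcases h1 with ⟨h1, -⟩ | ⟨h1, -, -⟩
        · linarith
        · simp [h1] at h0
    · rcases h0 with ⟨h0, -⟩ | ⟨h0, -, -⟩
      · rcases h1 with ⟨h1, -⟩ | ⟨h1, -, -⟩
        · have := mul_pos_of_neg_of_neg h0 h1
          rcases hs with hs | hs <;> rw [hs] at this <;> nlinarith
        · simp [h1] at h
      · simp [h0] at h
  · rw [if_pos]
    rw [zpow_add₀ (by norm_num), zpow_one] at h1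
    rcases h0 with ⟨h0, -⟩ | ⟨h0, -, -⟩
    · right
      rcases h1 with ⟨h1, -⟩ | ⟨h1, h2, -⟩
      · have : u n * u (n + 1) < 0 := by
          rcases hs with hs | hs <;> rw [hs] at h0 h1 <;> nlinarith
        nlinarith
      -- At a zero of `u` the difference equation flips the sign from `n` to `n + 2`.
      · exfalso
        rw [h1] at hrec
        rcases hs with hs | hs <;> rw [hs] at h0 h2 <;> nlinarith
    · exact Or.inl h0

open Classical in
lemma ceil_telescope (ha : ∀ n : ℤ, a n < 0) (hu : IsJSolution a b z u) (hp : IsPrufer a u ρ θ)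
    (m : ℤ) {n : ℤ} (hmn : m ≤ n) :
    (((Finset.Ico m n).filter (fun j => IsNode a u j)).card : ℤ) = ⌈θ n / π⌉ - ⌈θ m / π⌉ := by
  induction n, hmn using Int.leInduction with
  | base => simp
  | succ n hmn ih =>
    rw [ceil_step ha hu hp n, ← Finset.insert_Ico_right_eq_Ico_add_one hmn, Finset.filter_insert]
    split_ifs with h
    · rw [Finset.card_insert_of_notMem (by simp)]
      push_cast
      linarith
    · linarith

end

/-- Node count via Prüfer angles. -/
theorem stmt_8 (a b : ℤ → ℝ) (ha : ∀ n : ℤ, a n < 0) (z : ℝ) (u ρ θ : ℤ → ℝ)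
    (hu : IsJSolution a b z u) (hp : IsPrufer a u ρ θ)
    (m n : ℤ) (hmn : m < n) :
    (nodeCount a u m n : ℤ) = ⌈θ n / π⌉ - ⌊θ m / π⌋ - 1 := by
  classical
  have ht := ceil_telescope ha hu hp m hmn.le
  rw [← Finset.Ioo_insert_left hmn, Finset.filter_insert] at ht
  unfold nodeCount
  rcases prufer_sign ha hp m with ⟨h, hf⟩ | ⟨h, -, hf⟩
  · have hm : u m ≠ 0 := by
      rintro h'
      simp [h'] at h
    rw [hf]
    by_cases hn : IsNode a u m
    · rw [if_pos hn, Finset.card_insert_of_notMem (by simp)] at ht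
      rw [if_pos ⟨hn, hm⟩]
      push_cast at ht ⊢
      linarith
    · rw [if_neg hn] at ht
      rw [if_neg (fun h => hn h.1)]
      push_cast at ht ⊢
      linarith
  · have hn : IsNode a u m := Or.inl h
    rw [if_pos hn, Finset.card_insert_of_notMem (by simp)] at ht
    rw [if_neg (fun h' => h'.2 h), hf]
    push_cast at ht ⊢
    linarith
end
end

section
/- Let s_− be the solution of τs = zs with s_−(0) = 0, s_−(1) = 1 and Prüfer angle normalized by θ_{s_−}(0) = 0, and let s_+ be the solution with s_+(N) = 0, s_+(N+1) = 1 and θ_{s_+}(N) = 0. Then #_{(0,N)}(s_−) = ⌈θ_{s_−}(N)/π⌉ − 1 and #_{(0,N)}(s_+) = −⌊θ_{s_+}(0)/π⌋ − 1. -/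
/-!
The key fact is that the Prüfer angle crosses a multiple of `π` exactly at the nodes:
`⌈θ (n+1) / π⌉ = ⌈θ n / π⌉ + 1` if `n` is a node of `u`, and `⌈θ (n+1) / π⌉ = ⌈θ n / π⌉`
otherwise (`ceil_succ_of_node`, `ceil_succ_of_not_node`). Since the Prüfer condition leaves only
these two possibilities, it is enough to compare parities of the ceilings, and these are encoded
in the signs of `u`: with `e = (-1) ^ ⌈θ n / π⌉` one has `e * u n ≤ 0`, and `e * u (n+1) > 0` if
`u n = 0` (`pruefer_sign`). The Jacobi equation is needed only when `u (n+1) = 0`, where it says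
that `u n` and `u (n+2)` have opposite signs.

Summing over `0 ≤ n < N` shows that `⌈θ N / π⌉ - ⌈θ 0 / π⌉` is the number of nodes in `[0, N)`
(`ceil_sub_ceil`). Both claims follow by treating the endpoint `0` separately: `0` is always a
node of `s_-` with `s_- 0 = 0`, while for `s_+` the ceiling and the floor of `θ 0 / π` agree
precisely when `s_+ 0 = 0`.
-/

open Real

noncomputable section

/-- The ceiling of `t / π` determines the sign of `sin t`, and that of `cos t` at zeros
of `sin`. -/
lemma sin_cos_ceil (t : ℝ) :
    (-1 : ℝ) ^ ⌈t / π⌉ * sin t ≤ 0 ∧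
      (sin t = 0 → t = ⌈t / π⌉ * π ∧ 0 < (-1 : ℝ) ^ ⌈t / π⌉ * cos t) := by
  set k := ⌈t / π⌉ with hk
  have h1 : t ≤ k * π := (div_le_iff₀ pi_pos).1 (Int.le_ceil _)
  have h2 : (k - 1) * π < t := by
    have : (k : ℝ) - 1 < t / π := by linarith [Int.ceil_lt_add_one (t / π)]
    exact (lt_div_iff₀ pi_pos).1 this
  have he : (-1 : ℝ) ^ k * (-1 : ℝ) ^ k = 1 := by
    rw [← mul_zpow]; simp
  have hsin : (-1 : ℝ) ^ k * sin t = -sin (k * π - t) := by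
    have h : sin t = -((-1 : ℝ) ^ k * sin (k * π - t)) := by
      rw [← Real.sin_int_mul_pi_sub]; ring_nf
    rw [h]; linear_combination (-sin (k * π - t)) * he
  have hcos : (-1 : ℝ) ^ k * cos t = cos (k * π - t) := by
    rw [Real.cos_int_mul_pi_sub]
  refine ⟨?_, fun h0 => ?_⟩
  · rw [hsin]
    linarith [sin_nonneg_of_nonneg_of_le_pi (x := k * π - t) (by linarith) (by linarith)]
  · have ht : t = k * π := by
      by_contra hne
      have hlt : t < k * π := lt_of_le_of_ne h1 hne
      have := sin_pos_of_pos_of_lt_pi (x := k * π - t) (by linarith) (by linarith)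
      rw [h0] at hsin
      linarith
    refine ⟨ht, ?_⟩
    rw [hcos, ← ht]
    simp

/-- Signs of a sequence relative to the parity of the ceiling of its Prüfer angle. -/
lemma pruefer_sign {a u ρ θ : ℤ → ℝ} (ha : ∀ n, a n < 0) (hp : IsPrufer a u ρ θ) (n : ℤ) :
    (-1 : ℝ) ^ ⌈θ n / π⌉ * u n ≤ 0 ∧
      (u n = 0 → θ n = ⌈θ n / π⌉ * π ∧ 0 < (-1 : ℝ) ^ ⌈θ n / π⌉ * u (n + 1)) := by
  obtain ⟨hρ, hs, hc, -, -⟩ := hp n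
  obtain ⟨h1, h2⟩ := sin_cos_ceil (θ n)
  refine ⟨by rw [hs]; nlinarith, fun h0 => ?_⟩
  have hsin : sin (θ n) = 0 := by
    rw [hs] at h0
    exact (mul_eq_zero.1 h0).resolve_left hρ.ne'
  obtain ⟨h3, h4⟩ := h2 hsin
  refine ⟨h3, ?_⟩
  have h5 : -(a n) * ((-1 : ℝ) ^ ⌈θ n / π⌉ * u (n + 1)) =
      ρ n * ((-1 : ℝ) ^ ⌈θ n / π⌉ * cos (θ n)) := by
    linear_combination (-1 : ℝ) ^ ⌈θ n / π⌉ * hc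
  have h6 := mul_pos hρ h4
  rw [← h5] at h6
  exact pos_of_mul_pos_right h6 (by linarith [ha n])

lemma ceil_succ_of_node {a u ρ θ : ℤ → ℝ} (ha : ∀ n, a n < 0) (hp : IsPrufer a u ρ θ) {n : ℤ}
    (hn : IsNode a u n) : ⌈θ (n + 1) / π⌉ = ⌈θ n / π⌉ + 1 := by
  obtain ⟨-, -, -, hle, hle'⟩ := hp n
  by_contra hne
  have hk : ⌈θ (n + 1) / π⌉ = ⌈θ n / π⌉ := by omega
  obtain ⟨h1, h2⟩ := pruefer_sign ha hp n
  obtain ⟨h3, -⟩ := pruefer_sign ha hp (n + 1)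
  rw [hk] at h3
  rcases hn with h0 | hpos
  · linarith [(h2 h0).2]
  · have he : (-1 : ℝ) ^ ⌈θ n / π⌉ * (-1 : ℝ) ^ ⌈θ n / π⌉ = 1 := by
      rw [← mul_zpow]; simp
    have h4 := mul_nonneg_of_nonpos_of_nonpos h1 h3
    have h5 : 0 ≤ u n * u (n + 1) := by
      calc 0 ≤ _ := h4
        _ = u n * u (n + 1) := by linear_combination (u n * u (n + 1)) * he
    nlinarith [ha n]

lemma ceil_succ_of_not_node {a b u ρ θ : ℤ → ℝ} {z : ℝ} (ha : ∀ n, a n < 0)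
    (hu : IsJSolution a b z u) (hp : IsPrufer a u ρ θ) {n : ℤ}
    (hn : ¬ IsNode a u n) : ⌈θ (n + 1) / π⌉ = ⌈θ n / π⌉ := by
  obtain ⟨-, -, -, hle, hle'⟩ := hp n
  by_contra hne
  have hk : ⌈θ (n + 1) / π⌉ = ⌈θ n / π⌉ + 1 := by omega
  obtain ⟨h1, -⟩ := pruefer_sign ha hp n
  obtain ⟨h3, h4⟩ := pruefer_sign ha hp (n + 1)
  have hrec := hu.2 (n + 1)
  rw [hk, zpow_add_one₀ (by norm_num)] at h3 h4
  have he : (-1 : ℝ) ^ ⌈θ n / π⌉ * (-1 : ℝ) ^ ⌈θ n / π⌉ = 1 := by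
    rw [← mul_zpow]; simp
  generalize (-1 : ℝ) ^ ⌈θ n / π⌉ = e at h1 h3 h4 he
  simp only [IsNode, not_or, not_lt, gt_iff_lt] at hn
  obtain ⟨hn0, hn1⟩ := hn
  have he0 : e ≠ 0 := by rintro rfl; norm_num at he
  have hneg : e * u n < 0 := lt_of_le_of_ne h1 (mul_ne_zero he0 hn0)
  have hprod : 0 ≤ u n * u (n + 1) := by
    by_contra hlt
    nlinarith [ha n]
  have hprod' : 0 ≤ (e * u n) * (e * u (n + 1)) := by
    calc 0 ≤ u n * u (n + 1) := hprod
      _ = _ := by linear_combination (-(u n * u (n + 1))) * he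
  have hz : e * u (n + 1) = 0 := by nlinarith
  have hz' : u (n + 1) = 0 := (mul_eq_zero.1 hz).resolve_left he0
  have h5 : 0 < e * -1 * u (n + 1 + 1) := (h4 hz').right
  have han := ha (n + 1)
  -- At a zero the Jacobi equation reads `a (n+1) u (n+2) = - a n u n`.
  have h6 : a (n + 1) * (e * u (n + 1 + 1)) = -(a n) * (e * u n) := by
    simp only [jTau, hz', add_sub_cancel_right] at hrec
    linear_combination e * hrec
  nlinarith [mul_pos (neg_pos.2 (ha n)) (neg_pos.2 hneg)]

open Classical in
/-- The increment of the ceiling of the Prüfer angle over `[0, M]` counts nodes in `[0, M)`. -/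
lemma ceil_sub_ceil {a b u ρ θ : ℤ → ℝ} {z : ℝ} (ha : ∀ n, a n < 0)
    (hu : IsJSolution a b z u) (hp : IsPrufer a u ρ θ) (M : ℕ) :
    ⌈θ M / π⌉ - ⌈θ 0 / π⌉ = (((Finset.Ico (0 : ℤ) M).filter (fun n => IsNode a u n)).card : ℤ) := by
  induction M with
  | zero => simp
  | succ M ih =>
    have hI : Finset.Ico (0 : ℤ) ((M + 1 : ℕ) : ℤ) = insert (M : ℤ) (Finset.Ico (0 : ℤ) M) := by
      ext x; simp only [Finset.mem_Ico, Finset.mem_insert]; omega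
    rw [hI, Finset.filter_insert]
    push_cast
    split_ifs with hn
    · rw [Finset.card_insert_of_notMem (by simp), ceil_succ_of_node ha hp hn]
      push_cast
      linarith
    · rw [ceil_succ_of_not_node ha hu hp hn, ih]

open Classical in
/-- `nodeCount` leaves out the endpoint `0` from the nodes in `[0, N)` exactly when `u 0 = 0`. -/
lemma nodeCount_eq (a u : ℤ → ℝ) {N : ℕ} (hN : 0 < N) :
    (nodeCount a u 0 N : ℤ) =
      (((Finset.Ico (0 : ℤ) N).filter (fun n => IsNode a u n)).card : ℤ) -
        if u 0 = 0 then 1 else 0 := by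
  have hI : Finset.Ico (0 : ℤ) N = insert 0 (Finset.Ioo (0 : ℤ) N) := by
    ext x; simp only [Finset.mem_Ico, Finset.mem_Ioo, Finset.mem_insert]; omega
  rw [nodeCount, hI, Finset.filter_insert]
  by_cases h0 : u 0 = 0
  · have hn : IsNode a u 0 := Or.inl h0
    rw [if_pos hn, Finset.card_insert_of_notMem (by simp)]
    simp [h0]
  · by_cases hn : IsNode a u 0
    · rw [if_pos hn, Finset.card_insert_of_notMem (by simp)]
      simp [h0, hn]
    · simp [h0, hn]

/-- Node counts of the Dirichlet solutions $s_-$ and $s_+$ via Prüfer angles. -/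
theorem stmt_9 (N : ℕ) (hN : 2 ≤ N) (a b : ℤ → ℝ) (ha : ∀ n : ℤ, a n < 0) (z : ℝ)
    (sm ρm θm sp ρp θp : ℤ → ℝ)
    (hsm : IsJSolution a b z sm) (hsm0 : sm 0 = 0) (hsm1 : sm 1 = 1)
    (hpm : IsPrufer a sm ρm θm) (hθm0 : θm 0 = 0)
    (hsp : IsJSolution a b z sp) (hspN : sp (N : ℤ) = 0) (hspN1 : sp ((N : ℤ) + 1) = 1)
    (hpp : IsPrufer a sp ρp θp) (hθpN : θp (N : ℤ) = 0) :
    (nodeCount a sm 0 (N : ℤ) : ℤ) = ⌈θm (N : ℤ) / π⌉ - 1 ∧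
    (nodeCount a sp 0 (N : ℤ) : ℤ) = -⌊θp 0 / π⌋ - 1 := by
  have hN0 : 0 < N := by omega
  have hm := ceil_sub_ceil ha hsm hpm N
  have hp := ceil_sub_ceil ha hsp hpp N
  rw [nodeCount_eq a sm hN0, nodeCount_eq a sp hN0, ← hm, ← hp, hθm0, hθpN]
  refine ⟨by simp [hsm0], ?_⟩
  by_cases h0 : sp 0 = 0
  · have ht := ((pruefer_sign ha hpp 0).2 h0).1
    have hfl : ⌊θp 0 / π⌋ = ⌈θp 0 / π⌉ := by
      have hq : θp 0 / π = ⌈θp 0 / π⌉ := (div_eq_iff pi_ne_zero).2 ht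
      conv_lhs => rw [hq]
      exact Int.floor_intCast _
    simp [h0, hfl]
  · have hce : ⌈θp 0 / π⌉ = ⌊θp 0 / π⌋ + 1 := by
      have hle := Int.ceil_le_floor_add_one (θp 0 / π)
      have hlt : ⌊θp 0 / π⌋ < ⌈θp 0 / π⌉ := by
        by_contra hge
        -- If floor and ceiling agree, `θp 0` is a multiple of `π`, so `sp 0 = 0`.
        have hge' : (⌈θp 0 / π⌉ : ℝ) ≤ ⌊θp 0 / π⌋ := by exact_mod_cast not_lt.1 hge
        have hq : θp 0 / π = ⌊θp 0 / π⌋ :=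
          le_antisymm ((Int.le_ceil _).trans hge') (Int.floor_le _)
        apply h0
        rw [(hpp 0).2.1, (div_eq_iff pi_ne_zero).1 hq, sin_int_mul_pi, mul_zero]
      omega
    simp only [h0, hce, if_false, zero_div, Int.ceil_zero]
    ring
end
end

section
/- Let u_0, u_1 be solutions of τ_0 u = zu and τ_1 u = zu respectively, with Prüfer angles θ_0, θ_1, and fix n ∈ ℤ. Then for j = 0,1 there exist k_j ∈ ℤ such that θ_j(n) = k_jπ + γ_j with γ_j ∈ (0, π] and θ_j(n+1) = k_jπ + Γ_j with Γ_j ∈ (0, 2π), and: (1) if either both u_0 and u_1 have a node at n or neither does, then γ_1 − γ_0 ∈ (−π/2, π/2) and Γ_1 − Γ_0 ∈ (−π, π); (2) if u_0 has a node at n but u_1 does not, then γ_1 − γ_0 ∈ (−π, 0) and Γ_1 − Γ_0 ∈ (−2π, 0); (3) if u_1 has a node at n but u_0 does not, then γ_1 − γ_0 ∈ (0, π) and Γ_1 − Γ_0 ∈ (0, 2π). -/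
/-!
Each angle is analysed on its own. With `k = ⌈θ n / π⌉ - 1`, put `γ = θ n - kπ ∈ (0, π]` and
`Γ = θ (n+1) - kπ ∈ (0, 2π]`. As `a n < 0`, the index `n` is a node exactly when `cos γ < 0`,
i.e. `γ ∈ (π/2, π]`, and `u (n+1)` gives `sin Γ` the same sign as `cos γ`. Hence a node has
`Γ ∈ (π, 2π)`, and a non-node has `γ ∈ (0, π/2]` and `Γ ∈ (0, π]`. The only delicate point is
`γ = π/2`, where `sin Γ = 0` leaves both `π` and `2π`; there `u (n+1) = 0`, and the recursion at
`n+1` shows that `u (n+2)` and `u n` have opposite signs, so `cos Γ < 0` and `Γ = π`.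
The comparison of the two solutions (`prufer_position` applied to each) is then interval arithmetic.
-/

open Real

noncomputable section

/-- Position of a single Prüfer angle at `n` and `n + 1`, according to whether `n` is a node. -/
theorem prufer_position (a b : ℤ → ℝ) (ha : ∀ n : ℤ, a n < 0) (z : ℝ) (u ρ θ : ℤ → ℝ)
    (h : IsJSolution a b z u) (hp : IsPrufer a u ρ θ) (n : ℤ) :
    ∃ k : ℤ,
      (IsNode a u n ∧ π / 2 < θ n - k * π ∧ θ n - k * π ≤ π ∧
        π < θ (n + 1) - k * π ∧ θ (n + 1) - k * π < 2 * π) ∨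
      (¬ IsNode a u n ∧ 0 < θ n - k * π ∧ θ n - k * π ≤ π / 2 ∧
        0 < θ (n + 1) - k * π ∧ θ (n + 1) - k * π ≤ π) := by
  obtain ⟨hρ, hs, hc, hl, hr⟩ := hp n
  obtain ⟨hρ', hs', hc', -, -⟩ := hp (n + 1)
  have hrec := h.2 (n + 1)
  rw [jTau, add_sub_cancel_right] at hrec
  have han := ha n
  have hpi := Real.pi_pos
  obtain ⟨k, hk⟩ : ∃ k : ℤ, ⌈θ n / π⌉ = k + 1 := ⟨⌈θ n / π⌉ - 1, by ring⟩
  rw [hk] at hl hr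
  have hγ := Int.ceil_eq_iff.1 hk
  push_cast at hγ
  rw [lt_div_iff₀ hpi, div_le_iff₀ hpi] at hγ
  have hΓ1 : (k : ℝ) < θ (n + 1) / π := Int.lt_ceil.1 (by omega)
  have hΓ2 : θ (n + 1) / π ≤ ((k + 1 + 1 : ℤ) : ℝ) := Int.ceil_le.1 hr
  push_cast at hΓ2
  rw [lt_div_iff₀ hpi] at hΓ1
  rw [div_le_iff₀ hpi] at hΓ2
  refine ⟨k, ?_⟩
  have e1 := Real.sin_sub_int_mul_pi (θ n) k
  have e2 := Real.cos_sub_int_mul_pi (θ n) k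
  have e3 := Real.sin_sub_int_mul_pi (θ (n + 1)) k
  have e4 := Real.cos_sub_int_mul_pi (θ (n + 1)) k
  have hγ1 : 0 < θ n - k * π := by linarith
  have hγ2 : θ n - k * π ≤ π := by linarith
  have hΓ1 : 0 < θ (n + 1) - k * π := by linarith
  have hΓ2 : θ (n + 1) - k * π ≤ 2 * π := by linarith
  generalize θ n - k * π = γ at *
  generalize θ (n + 1) - k * π = Γ at *
  obtain ⟨s, hsdef⟩ : ∃ s : ℝ, s = (-1) ^ k := ⟨_, rfl⟩
  have hss : s * s = 1 := by
    rw [hsdef]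
    rcases Int.even_or_odd k with hk | hk
    · simp [hk.neg_one_zpow]
    · simp [hk.neg_one_zpow]
  rw [← hsdef] at e1 e2 e3 e4
  -- the sign `(-1) ^ k` is absorbed in `γ` and `Γ`
  have f1 : u n = ρ n * (s * Real.sin γ) := by rw [hs, e1, ← mul_assoc s, hss, one_mul]
  have f2 : -(a n) * u (n + 1) = ρ n * (s * Real.cos γ) := by
    rw [hc, e2, ← mul_assoc s, hss, one_mul]
  have f3 : u (n + 1) = ρ (n + 1) * (s * Real.sin Γ) := by
    rw [hs', e3, ← mul_assoc s, hss, one_mul]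
  have f4 : -(a (n + 1)) * u (n + 1 + 1) = ρ (n + 1) * (s * Real.cos Γ) := by
    rw [hc', e4, ← mul_assoc s, hss, one_mul]
  have key : -(a n) * ρ (n + 1) * Real.sin Γ = ρ n * Real.cos γ := by
    have : s * (-(a n) * ρ (n + 1) * Real.sin Γ) = s * (ρ n * Real.cos γ) := by
      rw [f3] at f2; linarith
    calc _ = s * s * (-(a n) * ρ (n + 1) * Real.sin Γ) := by rw [hss, one_mul]
      _ = s * s * (ρ n * Real.cos γ) := by rw [mul_assoc, this, mul_assoc]
      _ = _ := by rw [hss, one_mul]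
  have hcoef : 0 < -(a n) * ρ (n + 1) := mul_pos (by linarith) hρ'
  have prod : a n * u n * u (n + 1) = -(ρ n ^ 2 * (Real.sin γ * Real.cos γ)) := by
    calc a n * u n * u (n + 1) = -(u n * (-(a n) * u (n + 1))) := by ring
      _ = -(ρ n ^ 2 * (s * s) * (Real.sin γ * Real.cos γ)) := by rw [f2, f1]; ring
      _ = _ := by rw [hss, mul_one]
  have hρ2 : 0 < ρ n ^ 2 := by positivity
  rcases lt_or_ge (π / 2) γ with hg | hg
  · left
    have hcos : Real.cos γ < 0 := Real.cos_neg_of_pi_div_two_lt_of_lt hg (by linarith)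
    have hsin : Real.sin Γ < 0 := by
      by_contra! hcon
      nlinarith [mul_nonneg hcoef.le hcon, mul_pos hρ (neg_pos.2 hcos)]
    refine ⟨?_, hg, hγ2, ?_, ?_⟩
    · rcases hγ2.eq_or_lt with he | hlt
      · left; rw [f1, he]; simp
      · right
        have := Real.sin_pos_of_pos_of_lt_pi hγ1 hlt
        rw [prod]
        nlinarith [mul_pos hρ2 (mul_pos this (neg_pos.2 hcos))]
    · by_contra! hcon
      linarith [Real.sin_nonneg_of_nonneg_of_le_pi hΓ1.le hcon]
    · refine lt_of_le_of_ne hΓ2 fun he => ?_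
      rw [he, Real.sin_two_pi] at hsin
      exact lt_irrefl _ hsin
  · right
    have hsin : 0 < Real.sin γ := Real.sin_pos_of_pos_of_lt_pi hγ1 (by linarith)
    have hcos : 0 ≤ Real.cos γ := Real.cos_nonneg_of_mem_Icc ⟨by linarith, hg⟩
    have hsinΓ : 0 ≤ Real.sin Γ := by
      by_contra! hcon
      nlinarith [mul_pos hcoef (neg_pos.2 hcon), mul_nonneg hρ.le hcos]
    refine ⟨?_, hγ1, hg, hΓ1, ?_⟩
    · rintro (h0 | hpos)
      · have hs0 : s ≠ 0 := by rintro rfl; simp at hss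
        rw [f1] at h0
        exact mul_ne_zero hρ.ne' (mul_ne_zero hs0 hsin.ne') h0
      · rw [prod] at hpos
        linarith [mul_nonneg hρ2.le (mul_nonneg hsin.le hcos)]
    · by_contra! hcon
      have hend : Γ = 2 * π := by
        refine hΓ2.eq_or_lt.resolve_right fun hlt => ?_
        have := Real.sin_neg_of_neg_of_neg_pi_lt (x := Γ - 2 * π) (by linarith) (by linarith)
        rw [Real.sin_sub_two_pi] at this
        linarith
      -- here `u (n+1) = 0`, and the recursion at `n+1` contradicts `cos Γ = 1`
      rw [hend, Real.sin_two_pi, mul_zero, mul_zero] at f3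
      rw [hend, Real.cos_two_pi, mul_one] at f4
      rw [f3, mul_zero, mul_zero, add_zero, f1] at hrec
      have h5 : s * ρ (n + 1) = s * (a n * ρ n * Real.sin γ) := by linarith
      have h6 : ρ (n + 1) = a n * ρ n * Real.sin γ := by
        calc ρ (n + 1) = s * (s * ρ (n + 1)) := by rw [← mul_assoc, hss, one_mul]
          _ = _ := by rw [h5, ← mul_assoc, hss, one_mul]
      have h7 : a n * ρ n * Real.sin γ < 0 :=
        mul_neg_of_neg_of_pos (mul_neg_of_neg_of_pos han hρ) hsin
      linarith only [hρ', h6, h7]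

/-- Relative position of Prüfer angles of two solutions according to their nodes. -/
theorem stmt_11 (a0 b0 a1 b1 : ℤ → ℝ)
    (ha0 : ∀ n : ℤ, a0 n < 0) (ha1 : ∀ n : ℤ, a1 n < 0) (z : ℝ)
    (u0 ρ0 θ0 u1 ρ1 θ1 : ℤ → ℝ)
    (h0 : IsJSolution a0 b0 z u0) (hp0 : IsPrufer a0 u0 ρ0 θ0)
    (h1 : IsJSolution a1 b1 z u1) (hp1 : IsPrufer a1 u1 ρ1 θ1) (n : ℤ) :
    ∃ k0 k1 : ℤ,
      θ0 n - k0 * π ∈ Set.Ioc 0 π ∧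
      θ0 (n + 1) - k0 * π ∈ Set.Ioo 0 (2 * π) ∧
      θ1 n - k1 * π ∈ Set.Ioc 0 π ∧
      θ1 (n + 1) - k1 * π ∈ Set.Ioo 0 (2 * π) ∧
      ((IsNode a0 u0 n ↔ IsNode a1 u1 n) →
        ((θ1 n - k1 * π) - (θ0 n - k0 * π) ∈ Set.Ioo (-(π / 2)) (π / 2) ∧
         (θ1 (n + 1) - k1 * π) - (θ0 (n + 1) - k0 * π) ∈ Set.Ioo (-π) π)) ∧
      ((IsNode a0 u0 n ∧ ¬ IsNode a1 u1 n) →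
        ((θ1 n - k1 * π) - (θ0 n - k0 * π) ∈ Set.Ioo (-π) 0 ∧
         (θ1 (n + 1) - k1 * π) - (θ0 (n + 1) - k0 * π) ∈ Set.Ioo (-(2 * π)) 0)) ∧
      ((IsNode a1 u1 n ∧ ¬ IsNode a0 u0 n) →
        ((θ1 n - k1 * π) - (θ0 n - k0 * π) ∈ Set.Ioo 0 π ∧
         (θ1 (n + 1) - k1 * π) - (θ0 (n + 1) - k0 * π) ∈ Set.Ioo 0 (2 * π))) := by
  have hpi := Real.pi_pos
  obtain ⟨k0, H0⟩ := prufer_position a0 b0 ha0 z u0 ρ0 θ0 h0 hp0 n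
  obtain ⟨k1, H1⟩ := prufer_position a1 b1 ha1 z u1 ρ1 θ1 h1 hp1 n
  refine ⟨k0, k1, ?_⟩
  simp only [Set.mem_Ioc, Set.mem_Ioo]
  generalize θ0 n - k0 * π = γ0 at *
  generalize θ0 (n + 1) - k0 * π = Γ0 at *
  generalize θ1 n - k1 * π = γ1 at *
  generalize θ1 (n + 1) - k1 * π = Γ1 at *
  rcases H0 with ⟨n0, p1, p2, p3, p4⟩ | ⟨n0, p1, p2, p3, p4⟩ <;>
  rcases H1 with ⟨n1, q1, q2, q3, q4⟩ | ⟨n1, q1, q2, q3, q4⟩ <;>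
  simp only [n0, n1, iff_true, iff_false, not_true, not_false_iff, true_and, and_true, and_self,
    and_false, true_implies, false_implies] <;>
  refine ⟨⟨?_, ?_⟩, ⟨?_, ?_⟩, ⟨?_, ?_⟩, ⟨?_, ?_⟩, ⟨?_, ?_⟩, ⟨?_, ?_⟩⟩ <;> linarith
end
end

section
/- Let u_0, u_1 be solutions of τ_0 u = zu and τ_1 u = zu respectively, with Prüfer angles θ_0, θ_1, and set Δ(n) = θ_1(n) − θ_0(n). Then for all n ∈ ℤ, ⌈Δ(n)/π⌉ − 1 ≤ ⌈Δ(n+1)/π⌉ ≤ ⌈Δ(n)/π⌉ + 1. -/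
/-!
Put `x = θ(n)/π` and `y = θ(n+1)/π`. Since `-a(n) > 0`, the number `sin θ(n+1)` has the sign of
`cos θ(n) = sin (θ(n) + π/2)`, and when both vanish the recursion shows that `cos θ(n+1)` has the
sign of `cos (θ(n) + π/2)`. Together with the normalisation of `⌈θ/π⌉` this pins down
`⌊y⌋ = ⌊x + 1/2⌋` (`prufer_floor_step`).

Now `x₁ - x₀ = (x₁ + 1/2) - (x₀ + 1/2)` and `y₁ - y₀` are differences of reals with the same integer
parts `f₁`, `f₀`. Both lie strictly between `f₁ - f₀ - 1` and `f₁ - f₀ + 1`, so both ceilings belong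
to `{f₁ - f₀, f₁ - f₀ + 1}` and differ by at most one.
-/

open Real

noncomputable section

/-- One Prüfer step for angles reduced by a common multiple of `π`: it crosses `π` exactly when
the old angle has reached `π/2`. -/
lemma reduced_angle_step {α β c d : ℝ} (hα0 : 0 < α) (hαπ : α ≤ π) (hβ0 : 0 < β)
    (hβπ : β ≤ 2 * π) (hc : 0 < c) (hd : 0 < d) (hs : sin β = c * cos α)
    (hcos : cos α = 0 → cos β = -(d * sin α)) :
    (α < π / 2 ∧ β < π) ∨ (π / 2 ≤ α ∧ π ≤ β ∧ β < 2 * π) := by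
  have hpi := Real.pi_pos
  have hneg : π ≤ β → sin β ≤ 0 := fun h => by
    have := Real.sin_nonneg_of_nonneg_of_le_pi (x := β - π) (by linarith) (by linarith)
    rw [Real.sin_sub_pi] at this
    linarith
  have hpos : β < π → 0 < sin β := fun h => Real.sin_pos_of_pos_of_lt_pi hβ0 h
  rcases lt_trichotomy α (π / 2) with h | h | h
  · left
    refine ⟨h, ?_⟩
    by_contra! hb
    have h1 : 0 < cos α := Real.cos_pos_of_mem_Ioo ⟨by linarith, h⟩
    have h2 := mul_pos hc h1
    linarith [hneg hb]
  · right
    have h1 : cos α = 0 := by rw [h, Real.cos_pi_div_two]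
    have h2 : sin α = 1 := by rw [h, Real.sin_pi_div_two]
    have h3 := hcos h1
    rw [h1, mul_zero] at hs
    refine ⟨h.ge, ?_, lt_of_le_of_ne hβπ ?_⟩
    · by_contra! hb
      linarith [hpos hb]
    · rintro rfl
      rw [Real.cos_two_pi, h2] at h3
      linarith
  · right
    have h1 : cos α < 0 := Real.cos_neg_of_pi_div_two_lt_of_lt h (by linarith)
    have h2 := mul_neg_of_pos_of_neg hc h1
    refine ⟨h.le, ?_, lt_of_le_of_ne hβπ ?_⟩
    · by_contra! hb
      linarith [hpos hb]
    · rintro rfl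
      rw [Real.sin_two_pi] at hs
      linarith

/-- A Prüfer step acts on the integer part of the angle exactly like a rotation by `π/2`. -/
lemma prufer_floor_step {a b u ρ θ : ℤ → ℝ} {z : ℝ} (ha : ∀ n : ℤ, a n < 0)
    (h : IsJSolution a b z u) (hp : IsPrufer a u ρ θ) (n : ℤ) :
    ⌊θ (n + 1) / π⌋ = ⌊θ n / π + 1 / 2⌋ := by
  have hpi := Real.pi_pos
  obtain ⟨hρ, hu, hv, hk1, hk2⟩ := hp n
  obtain ⟨hρ', hu', hv', -, -⟩ := hp (n + 1)
  have hrec := h.2 (n + 1)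
  simp only [jTau, add_sub_cancel_right] at hrec
  have han := ha n
  set k : ℤ := ⌈θ n / π⌉ with hk
  -- `α` and `β` are the angles reduced by `(k - 1)π`, and `ε` is the common sign this introduces.
  obtain ⟨α, hα⟩ : ∃ α, θ n = α + ((k - 1 : ℤ) : ℝ) * π := ⟨_, (sub_add_cancel _ _).symm⟩
  obtain ⟨β, hβ⟩ : ∃ β, θ (n + 1) = β + ((k - 1 : ℤ) : ℝ) * π := ⟨_, (sub_add_cancel _ _).symm⟩
  have hx : θ n / π = α / π + k - 1 := by rw [hα]; push_cast; field_simp; ring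
  have hy : θ (n + 1) / π = β / π + k - 1 := by rw [hβ]; push_cast; field_simp; ring
  have b1 : 0 < α / π := by
    have := Int.ceil_lt_add_one (θ n / π)
    rw [← hk] at this; linarith
  have b2 : α / π ≤ 1 := by
    have := Int.le_ceil (θ n / π)
    rw [← hk] at this; linarith
  have b3 : 0 < β / π := by
    have h1 := Int.ceil_lt_add_one (θ (n + 1) / π)
    have h2 : (k : ℝ) ≤ (⌈θ (n + 1) / π⌉ : ℝ) := by exact_mod_cast hk1
    linarith
  have b4 : β / π ≤ 2 := by
    have h1 := Int.le_ceil (θ (n + 1) / π)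
    have h2 : (⌈θ (n + 1) / π⌉ : ℝ) ≤ (k : ℝ) + 1 := by exact_mod_cast hk2
    linarith
  rw [hα, Real.sin_add_int_mul_pi] at hu
  rw [hα, Real.cos_add_int_mul_pi] at hv
  rw [hβ, Real.sin_add_int_mul_pi] at hu'
  rw [hβ, Real.cos_add_int_mul_pi] at hv'
  have hε : ((-1 : ℝ) ^ (k - 1)) ≠ 0 := zpow_ne_zero _ (by norm_num)
  set ε : ℝ := (-1 : ℝ) ^ (k - 1)
  have hs : sin β = ρ n / (-(a n) * ρ (n + 1)) * cos α := by
    have : -(a n) * ρ (n + 1) ≠ 0 := (mul_pos (neg_pos.2 han) hρ').ne'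
    rw [div_mul_eq_mul_div, eq_div_iff this]
    apply mul_left_cancel₀ hε
    rw [hu'] at hv
    linarith
  have hc : cos α = 0 → cos β = -(-(a n) * ρ n / ρ (n + 1) * sin α) := by
    intro h0
    have hz : u (n + 1) = 0 := by
      rw [h0, mul_zero, mul_zero] at hv
      exact (mul_eq_zero.1 hv).resolve_left (neg_pos.2 han).ne'
    rw [hz, hu] at hrec
    rw [div_mul_eq_mul_div, ← neg_div, eq_div_iff hρ'.ne']
    apply mul_left_cancel₀ hε
    linarith
  have key := reduced_angle_step ((div_pos_iff_of_pos_right hpi).1 b1) ((div_le_one hpi).1 b2)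
    ((div_pos_iff_of_pos_right hpi).1 b3) ((div_le_iff₀ hpi).1 b4)
    (div_pos hρ (mul_pos (neg_pos.2 han) hρ'))
    (div_pos (mul_pos (neg_pos.2 han) hρ) hρ') hs hc
  rw [hx, hy]
  rcases key with ⟨h1, h2⟩ | ⟨h1, h2, h3⟩
  · have e1 : α / π < 1 / 2 := by rw [div_lt_iff₀ hpi]; linarith
    have e2 : β / π < 1 := (div_lt_one hpi).2 h2
    trans k - 1
    · rw [Int.floor_eq_iff]; push_cast; constructor <;> linarith
    · symm; rw [Int.floor_eq_iff]; push_cast; constructor <;> linarith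
  · have e1 : 1 / 2 ≤ α / π := by rw [le_div_iff₀ hpi]; linarith
    have e2 : 1 ≤ β / π := (one_le_div hpi).2 h2
    have e3 : β / π < 2 := (div_lt_iff₀ hpi).2 h3
    trans k
    · rw [Int.floor_eq_iff]; constructor <;> linarith
    · symm; rw [Int.floor_eq_iff]; constructor <;> linarith

lemma ceil_sub_bounds (x y : ℝ) :
    ⌊x⌋ - ⌊y⌋ ≤ ⌈x - y⌉ ∧ ⌈x - y⌉ ≤ ⌊x⌋ - ⌊y⌋ + 1 := by
  have h1 := Int.floor_le x
  have h2 := Int.lt_floor_add_one x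
  have h3 := Int.floor_le y
  have h4 := Int.lt_floor_add_one y
  constructor
  · rw [← Int.sub_one_lt_iff, Int.lt_ceil]; push_cast; linarith
  · rw [Int.ceil_le]; push_cast; linarith

/-- The ceiling of the Prüfer angle difference changes by at most one per step. -/
theorem stmt_12 (a0 b0 a1 b1 : ℤ → ℝ)
    (ha0 : ∀ n : ℤ, a0 n < 0) (ha1 : ∀ n : ℤ, a1 n < 0) (z : ℝ)
    (u0 ρ0 θ0 u1 ρ1 θ1 : ℤ → ℝ)
    (h0 : IsJSolution a0 b0 z u0) (hp0 : IsPrufer a0 u0 ρ0 θ0)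
    (h1 : IsJSolution a1 b1 z u1) (hp1 : IsPrufer a1 u1 ρ1 θ1) (n : ℤ) :
    ⌈(θ1 n - θ0 n) / π⌉ - 1 ≤ ⌈(θ1 (n + 1) - θ0 (n + 1)) / π⌉ ∧
    ⌈(θ1 (n + 1) - θ0 (n + 1)) / π⌉ ≤ ⌈(θ1 n - θ0 n) / π⌉ + 1 := by
  have e0 := prufer_floor_step ha0 h0 hp0 n
  have e1 := prufer_floor_step ha1 h1 hp1 n
  have hD := ceil_sub_bounds (θ1 n / π + 1 / 2) (θ0 n / π + 1 / 2)
  have hE := ceil_sub_bounds (θ1 (n + 1) / π) (θ0 (n + 1) / π)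
  rw [add_sub_add_right_eq_sub] at hD
  rw [sub_div, sub_div]
  omega
end
end

section
/- Let u_0, u_1 be solutions of τ_0 u = zu and τ_1 u = zu respectively, such that W_n(u_0,u_1)·W_{n+1}(u_0,u_1) < 0, or W_n(u_0,u_1) = 0 and W_{n+1}(u_0,u_1) ≠ 0, or W_n(u_0,u_1) ≠ 0 and W_{n+1}(u_0,u_1) = 0. Then u_0(n+1)·u_1(n+1) ≠ 0, and moreover a_0(n) ≠ a_1(n) or b_0(n+1) ≠ b_1(n+1). -/
/-!
Substituting the recursions at `n + 1` into `W_{n+1}` gives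
`W_{n+1} = (b₀(n+1) - b₁(n+1)) u₀(n+1) u₁(n+1) + a₀(n) u₀(n) u₁(n+1) - a₁(n) u₀(n+1) u₁(n)`
(`jW_succ`). If `u₀(n+1) = 0` or `u₁(n+1) = 0`, one term survives, and `W_n`, `W_{n+1}` are
proportional with coefficients `a₀(n), a₁(n) < 0`; if the coefficients agree, `W_{n+1} = W_n`.
In each case the two Wronskians have the same sign, so neither a strict sign change nor a one-sided
zero is possible (`no_node_of_proportional`).
-/

open Real

noncomputable section

/-- The Wronskian at `n + 1` in terms of the values of the solutions at `n` and `n + 1`. -/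
lemma jW_succ {a0 b0 a1 b1 : ℤ → ℝ} {z : ℝ} {u0 u1 : ℤ → ℝ}
    (h0 : IsJSolution a0 b0 z u0) (h1 : IsJSolution a1 b1 z u1) (n : ℤ) :
    jW a0 a1 u0 u1 (n + 1) =
      (b0 (n + 1) - b1 (n + 1)) * (u0 (n + 1) * u1 (n + 1))
        + a0 n * u0 n * u1 (n + 1) - a1 n * u0 (n + 1) * u1 n := by
  have e0 := h0.2 (n + 1)
  have e1 := h1.2 (n + 1)
  simp only [jTau, add_sub_cancel_right] at e0 e1
  unfold jW
  linear_combination u0 (n + 1) * e1 - u1 (n + 1) * e0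

/-- Reals that are proportional with negative coefficients have the same sign. -/
lemma no_node_of_proportional {p q v w : ℝ} (hp : p < 0) (hq : q < 0) (hvw : p * v = q * w) :
    ¬ (v * w < 0 ∨ (v = 0 ∧ w ≠ 0) ∨ (v ≠ 0 ∧ w = 0)) := by
  rintro (h | ⟨hv, hw⟩ | ⟨hv, hw⟩)
  · have h2 : p * (v * w) = q * w ^ 2 := by linear_combination w * hvw
    nlinarith [mul_pos_of_neg_of_neg hp h, mul_nonneg_of_nonpos_of_nonpos hq.le
      (neg_nonpos.mpr (sq_nonneg w))]
  · simp [hv, hw, hq.ne] at hvw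
  · simp [hv, hw, hp.ne] at hvw

/-- At a (weighted) node of the Wronskian the solutions do not vanish and the
operators differ locally. -/
theorem stmt_14 (a0 b0 a1 b1 : ℤ → ℝ)
    (ha0 : ∀ n : ℤ, a0 n < 0) (ha1 : ∀ n : ℤ, a1 n < 0) (z : ℝ)
    (u0 u1 : ℤ → ℝ)
    (h0 : IsJSolution a0 b0 z u0) (h1 : IsJSolution a1 b1 z u1) (n : ℤ)
    (h : jW a0 a1 u0 u1 n * jW a0 a1 u0 u1 (n + 1) < 0 ∨
         (jW a0 a1 u0 u1 n = 0 ∧ jW a0 a1 u0 u1 (n + 1) ≠ 0) ∨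
         (jW a0 a1 u0 u1 n ≠ 0 ∧ jW a0 a1 u0 u1 (n + 1) = 0)) :
    u0 (n + 1) * u1 (n + 1) ≠ 0 ∧
    (a0 n ≠ a1 n ∨ b0 (n + 1) ≠ b1 (n + 1)) := by
  have hW := jW_succ h0 h1 n
  refine ⟨fun hxy => ?_, ?_⟩
  · rcases mul_eq_zero.mp hxy with hx | hy
    · refine no_node_of_proportional (ha0 n) (ha1 n) ?_ h
      rw [hW, jW, hx]
      ring
    · refine no_node_of_proportional (ha1 n) (ha0 n) ?_ h
      rw [hW, jW, hy]
      ring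
  · by_contra! hab
    refine no_node_of_proportional (ha0 n) (ha0 n) ?_ h
    rw [hW, jW, hab.1, hab.2]
    ring
end
end

section
/- Weighted nodes of the Wronskian via Prüfer angles: Let u_0, u_1 be solutions of τ_0 u = zu and τ_1 u = zu respectively, with Prüfer angles θ_0, θ_1, and set Δ(n) = θ_1(n) − θ_0(n). Then for every n ∈ ℤ: ⌈Δ(n+1)/π⌉ = ⌈Δ(n)/π⌉ + 1 if and only if W_{n+1}(u_0,u_1)·u_0(n+1)·u_1(n+1) > 0 and either W_n(u_0,u_1)·W_{n+1}(u_0,u_1) < 0 or (W_n(u_0,u_1) = 0 and W_{n+1}(u_0,u_1) ≠ 0); and ⌈Δ(n+1)/π⌉ = ⌈Δ(n)/π⌉ − 1 if and only if W_n(u_0,u_1)·u_0(n+1)·u_1(n+1) > 0 and either W_n(u_0,u_1)·W_{n+1}(u_0,u_1) < 0 or (W_n(u_0,u_1) ≠ 0 and W_{n+1}(u_0,u_1) = 0). In particular #_n(u_0,u_1) = ⌈Δ(n+1)/π⌉ − ⌈Δ(n)/π⌉. -/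
/-!
By the addition formula the Wronskian is `W_n = ρ₀(n) ρ₁(n) sin Δ(n)` with `Δ = θ₁ - θ₀`
(`jW_eq_sin`), so everything depends on the position of `Δ(n)` and `Δ(n+1)` relative to the
multiples of `π`.

The points `kπ` and the open intervals `(kπ, (k+1)π)` partition the line into cells. The key
fact (`prufer_cell`) is that `θ_j(n) + π/2` and `θ_j(n+1)` always lie in the same cell: both
`cos θ_j(n)` and `sin θ_j(n+1)` have the sign of `u_j(n+1)`, and the ceiling condition on Prüfer
angles leaves no other cell, except that for `u_j(n+1) = 0` the difference equation is needed to
fix the sign of `cos θ_j(n+1)`.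

Since `Δ(n)` is also the difference of the shifted angles `θ_j(n) + π/2`, subtracting cells shows:
if one of `u_0(n+1)`, `u_1(n+1)` vanishes, then `Δ(n)` and `Δ(n+1)` share a cell and nothing
changes. Otherwise both lie in `((d-1)π, (d+1)π)` for some integer `d`, where
`W_m u_0(n+1) u_1(n+1)` has the sign of `Δ(m) - dπ` for `m = n, n+1`; hence its signs tell which
of the values `d`, `d+1` the two ceilings take.
-/

open Real

noncomputable section

/-! ### Cells of the line cut at the multiples of `π` -/

/-- `x` and `y` lie in the same cell of the partition of the line into the points `kπ` and the
open intervals `(kπ, (k+1)π)`. -/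
def SameCell (x y : ℝ) : Prop :=
  ∃ k : ℤ, (x = k * π ∧ y = k * π) ∨
    ((k * π < x ∧ x < (k + 1) * π) ∧ (k * π < y ∧ y < (k + 1) * π))

lemma neg_one_zpow_eq (k : ℤ) : ((-1 : ℝ) ^ k = 1) ∨ ((-1 : ℝ) ^ k = -1) := by
  rcases Int.even_or_odd k with h | h
  · exact Or.inl h.neg_one_zpow
  · exact Or.inr h.neg_one_zpow

lemma ceil_div_pi {x : ℝ} {k : ℤ} (h1 : (k - 1) * π < x) (h2 : x ≤ k * π) :
    ⌈x / π⌉ = k := by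
  rw [Int.ceil_eq_iff]
  exact ⟨by rwa [lt_div_iff₀ pi_pos], by rwa [div_le_iff₀ pi_pos]⟩

lemma ceil_div_pi_bounds (x : ℝ) :
    (⌈x / π⌉ - 1) * π < x ∧ x ≤ ⌈x / π⌉ * π := by
  have h := (Int.ceil_eq_iff (a := x / π) (z := ⌈x / π⌉)).1 rfl
  exact ⟨by rw [← lt_div_iff₀ pi_pos]; exact h.1, by rw [← div_le_iff₀ pi_pos]; exact h.2⟩

lemma sin_neg_of_pi_lt {x : ℝ} (h1 : π < x) (h2 : x < 2 * π) : sin x < 0 := by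
  rw [← sin_sub_two_pi]
  exact sin_neg_of_neg_of_neg_pi_lt (by linarith) (by linarith)

/-! ### One step of the Prüfer angle -/

/-- The cell comparison for the angles `ξ`, `η` normalised by a multiple of `π` so that
`ξ ∈ (0, π]`. -/
lemma sameCell_aux {ξ η c d : ℝ} (hc : 0 < c) (hd : 0 < d)
    (h : sin η = c * cos ξ) (h' : cos ξ = 0 → cos η = -d * sin ξ)
    (hξ0 : 0 < ξ) (hξ1 : ξ ≤ π) (hη0 : 0 < η) (hη1 : η ≤ 2 * π) :
    (ξ < π / 2 ∧ η < π) ∨ (ξ = π / 2 ∧ η = π) ∨ (π / 2 < ξ ∧ π < η ∧ η < 2 * π) := by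
  have hpi := pi_pos
  rcases lt_trichotomy ξ (π / 2) with hx | hx | hx
  · left
    refine ⟨hx, ?_⟩
    by_contra! hη
    have h1 : 0 < cos ξ := cos_pos_of_mem_Ioo ⟨by linarith, hx⟩
    have h2 : 0 < c * cos ξ := mul_pos hc h1
    rcases hη.eq_or_lt with e | e
    · rw [← e, sin_pi] at h; linarith
    · rcases hη1.eq_or_lt with e' | e'
      · rw [e', sin_two_pi] at h; linarith
      · linarith [sin_neg_of_pi_lt e e']
  · right; left
    refine ⟨hx, ?_⟩
    have hcos : cos ξ = 0 := by rw [hx, cos_pi_div_two]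
    have h3 := h' hcos
    rw [hcos, mul_zero] at h
    rw [hx, sin_pi_div_two] at h3
    rcases lt_trichotomy η π with e | e | e
    · linarith [sin_pos_of_pos_of_lt_pi hη0 e]
    · exact e
    · rcases hη1.eq_or_lt with e' | e'
      · rw [e', cos_two_pi] at h3; linarith
      · linarith [sin_neg_of_pi_lt e e']
  · right; right
    have h1 : cos ξ < 0 := cos_neg_of_pi_div_two_lt_of_lt hx (by linarith)
    have h2 : c * cos ξ < 0 := mul_neg_of_pos_of_neg hc h1
    refine ⟨hx, ?_, ?_⟩
    · by_contra! e
      linarith [sin_nonneg_of_nonneg_of_le_pi hη0.le e]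
    · refine lt_of_le_of_ne hη1 fun e => ?_
      rw [e, sin_two_pi] at h; linarith

lemma sameCell_of_trig {x y c d : ℝ} (hc : 0 < c) (hd : 0 < d)
    (h : sin y = c * cos x) (h' : cos x = 0 → cos y = -d * sin x)
    (h1 : ⌈x / π⌉ ≤ ⌈y / π⌉) (h2 : ⌈y / π⌉ ≤ ⌈x / π⌉ + 1) :
    SameCell (x + π / 2) y := by
  have hpi := pi_pos
  obtain ⟨bx1, bx2⟩ := ceil_div_pi_bounds x
  obtain ⟨by1, by2⟩ := ceil_div_pi_bounds y
  obtain ⟨k, hk⟩ : ∃ k : ℤ, ⌈x / π⌉ = k + 1 := ⟨⌈x / π⌉ - 1, by ring⟩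
  rw [hk] at bx1 bx2 h1 h2
  have h1r : ((k + 1 : ℤ) : ℝ) * π ≤ ⌈y / π⌉ * π :=
    mul_le_mul_of_nonneg_right (by exact_mod_cast h1) hpi.le
  have h2r : (⌈y / π⌉ : ℝ) * π ≤ ((k + 1 + 1 : ℤ) : ℝ) * π :=
    mul_le_mul_of_nonneg_right (by exact_mod_cast h2) hpi.le
  push_cast at *
  obtain ⟨ξ, rfl⟩ : ∃ ξ, x = ξ + k * π := ⟨x - k * π, by ring⟩
  obtain ⟨η, rfl⟩ : ∃ η, y = η + k * π := ⟨y - k * π, by ring⟩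
  simp only [sin_add_int_mul_pi, cos_add_int_mul_pi] at h h'
  have key := sameCell_aux (ξ := ξ) (η := η) hc hd
    (by rcases neg_one_zpow_eq k with e | e <;> rw [e] at h <;> linarith)
    (by
      intro h0
      have := h' (by rw [h0, mul_zero])
      rcases neg_one_zpow_eq k with e | e <;> rw [e] at this <;> linarith)
    (by linarith) (by linarith) (by linarith) (by linarith)
  rcases key with ⟨e1, e2⟩ | ⟨e1, e2⟩ | ⟨e1, e2, e3⟩
  · exact ⟨k, Or.inr ⟨⟨by linarith, by linarith⟩, by linarith, by linarith⟩⟩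
  · exact ⟨k + 1, Or.inl ⟨by push_cast; linarith, by push_cast; linarith⟩⟩
  · exact ⟨k + 1, Or.inr
      ⟨⟨by push_cast; linarith, by push_cast; linarith⟩,
        by push_cast; linarith, by push_cast; linarith⟩⟩

/-- One step of the Prüfer recursion: a quarter turn carries `θ(n)` into the cell of `θ(n+1)`. -/
lemma prufer_cell {a b u ρ θ : ℤ → ℝ} {z : ℝ} (ha : ∀ n, a n < 0)
    (h : IsJSolution a b z u) (hp : IsPrufer a u ρ θ) (n : ℤ) :
    SameCell (θ n + π / 2) (θ (n + 1)) := by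
  obtain ⟨r0, s0, c0, l0, l0'⟩ := hp n
  obtain ⟨r1, s1, c1, -, -⟩ := hp (n + 1)
  have han := ha n
  have hrec := h.2 (n + 1)
  simp only [jTau, add_sub_cancel_right] at hrec
  have hpos : 0 < -(a n) * ρ (n + 1) := mul_pos (by linarith) r1
  refine sameCell_of_trig (c := ρ n / (-(a n) * ρ (n + 1))) (d := -(a n) * ρ n / ρ (n + 1))
    (div_pos r0 hpos) (div_pos (mul_pos (by linarith) r0) r1) ?_ ?_ l0 l0'
  · rw [div_mul_eq_mul_div, eq_div_iff hpos.ne', ← c0, s1]; ring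
  · intro hc
    rw [hc, mul_zero] at c0
    have hu : u (n + 1) = 0 := by
      rcases mul_eq_zero.1 c0 with e | e
      · linarith
      · exact e
    rw [hu, s0] at hrec
    field_simp
    linarith

lemma jW_eq_sin {a0 a1 u0 u1 ρ0 ρ1 θ0 θ1 : ℤ → ℝ} (hp0 : IsPrufer a0 u0 ρ0 θ0)
    (hp1 : IsPrufer a1 u1 ρ1 θ1) (n : ℤ) :
    jW a0 a1 u0 u1 n = ρ0 n * ρ1 n * sin (θ1 n - θ0 n) := by
  obtain ⟨-, s0, c0, -, -⟩ := hp0 n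
  obtain ⟨-, s1, c1, -, -⟩ := hp1 n
  have e : jW a0 a1 u0 u1 n
      = u1 n * (-(a0 n) * u0 (n + 1)) - u0 n * (-(a1 n) * u1 (n + 1)) := by
    unfold jW; ring
  rw [e, c0, c1, s0, s1, sin_sub]; ring

/-! ### Jumps of the ceiling of the angle difference -/

/-- The condition for a weighted node of weight `+1` with `A = W_n`, `B = W_{n+1}`,
`v = u₀(n+1)`, `w = u₁(n+1)`. -/
def PosNode (A B v w : ℝ) : Prop := B * v * w > 0 ∧ (A * B < 0 ∨ (A = 0 ∧ B ≠ 0))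

/-- The condition for a weighted node of weight `-1` with `A = W_n`, `B = W_{n+1}`,
`v = u₀(n+1)`, `w = u₁(n+1)`. -/
def NegNode (A B v w : ℝ) : Prop := A * v * w > 0 ∧ (A * B < 0 ∨ (A ≠ 0 ∧ B = 0))

/-- The correspondence between a jump from `p` to `q` of the ceilings and the node conditions. -/
def JumpRule (p q : ℤ) (A B v w : ℝ) : Prop :=
  (q = p ∧ ¬PosNode A B v w ∧ ¬NegNode A B v w) ∨
  (q = p + 1 ∧ PosNode A B v w ∧ ¬NegNode A B v w) ∨
  (q = p - 1 ∧ ¬PosNode A B v w ∧ NegNode A B v w)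

lemma jumpRule_of_mul_pos {p q : ℤ} {A B v w : ℝ} (hpq : q = p) (h : 0 < A * B) :
    JumpRule p q A B v w := by
  refine Or.inl ⟨hpq, ?_, ?_⟩
  · rintro ⟨-, h1 | ⟨h1, -⟩⟩
    · linarith
    · simp [h1] at h
  · rintro ⟨-, h1 | ⟨-, h1⟩⟩
    · linarith
    · simp [h1] at h

/-- Two differences in the same open cell: no jump and no sign change of the Wronskian. -/
lemma jumpRule_of_same_open {s t C D v w : ℝ} {m : ℤ} (hC : 0 < C) (hD : 0 < D)
    (hs1 : m * π < s) (hs2 : s < (m + 1) * π) (ht1 : m * π < t) (ht2 : t < (m + 1) * π) :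
    JumpRule ⌈s / π⌉ ⌈t / π⌉ (C * sin s) (D * sin t) v w := by
  apply jumpRule_of_mul_pos
  · rw [ceil_div_pi (x := s) (k := m + 1) (by push_cast; linarith) (by push_cast; linarith),
      ceil_div_pi (x := t) (k := m + 1) (by push_cast; linarith) (by push_cast; linarith)]
  · obtain ⟨σ, rfl⟩ : ∃ σ, s = σ + m * π := ⟨s - m * π, by ring⟩
    obtain ⟨τ, rfl⟩ : ∃ τ, t = τ + m * π := ⟨t - m * π, by ring⟩
    have h1 : 0 < sin σ := sin_pos_of_pos_of_lt_pi (by linarith) (by linarith)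
    have h2 : 0 < sin τ := sin_pos_of_pos_of_lt_pi (by linarith) (by linarith)
    have h3 : 0 < (C * sin σ) * (D * sin τ) := by positivity
    rw [sin_add_int_mul_pi, sin_add_int_mul_pi]
    rcases neg_one_zpow_eq m with e | e <;> rw [e] <;> linarith

lemma ceil_cases {σ : ℝ} (d : ℤ) (h1 : -π < σ) (h2 : σ < π) :
    (0 < σ ∧ 0 < sin σ ∧ ⌈(σ + d * π) / π⌉ = d + 1) ∨
    (σ = 0 ∧ sin σ = 0 ∧ ⌈(σ + d * π) / π⌉ = d) ∨
    (σ < 0 ∧ sin σ < 0 ∧ ⌈(σ + d * π) / π⌉ = d) := by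
  rcases lt_trichotomy σ 0 with h | h | h
  · exact Or.inr (Or.inr ⟨h, sin_neg_of_neg_of_neg_pi_lt h h1,
      ceil_div_pi (by linarith) (by linarith)⟩)
  · exact Or.inr (Or.inl ⟨h, by simp [h], ceil_div_pi (by linarith [pi_pos]) (by linarith)⟩)
  · exact Or.inl ⟨h, sin_pos_of_pos_of_lt_pi h h2,
      ceil_div_pi (by push_cast; linarith) (by push_cast; linarith)⟩

/-- The combinatorial part when `v * w ≠ 0`: the signs of `A`, `B` relative to that of `v * w`
are those of `S`, `T`, and the ceilings are `d + 1` or `d` according to whether these are positive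
or not. -/
lemma jumpRule_of_signs {p q d : ℤ} {A B v w S T : ℝ} (hvw : v * w ≠ 0)
    (hA : ∃ P > 0, A * (v * w) = P * S) (hB : ∃ P > 0, B * (v * w) = P * T)
    (hp : (0 < S ∧ p = d + 1) ∨ (S = 0 ∧ p = d) ∨ (S < 0 ∧ p = d))
    (hq : (0 < T ∧ q = d + 1) ∨ (T = 0 ∧ q = d) ∨ (T < 0 ∧ q = d)) :
    JumpRule p q A B v w := by
  obtain ⟨P, hP, hA⟩ := hA
  obtain ⟨Q, hQ, hB⟩ := hB
  have hsq : 0 < (v * w) * (v * w) := mul_self_pos.2 hvw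
  have hprod : (A * B) * ((v * w) * (v * w)) = (P * S) * (Q * T) := by rw [← hA, ← hB]; ring
  have hneg : A * B < 0 ↔ S * T < 0 := by
    have : (A * B) * ((v * w) * (v * w)) = (P * Q) * (S * T) := by rw [hprod]; ring
    have hPQ := mul_pos hP hQ
    constructor
    · intro h
      have := mul_neg_of_neg_of_pos h hsq
      by_contra! h'
      have := mul_nonneg hPQ.le h'
      linarith
    · intro h
      have := mul_neg_of_pos_of_neg hPQ h
      by_contra! h'
      have := mul_nonneg h' hsq.le
      linarith
  have hA0 : A = 0 ↔ S = 0 := by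
    constructor
    · intro h
      rw [h, zero_mul] at hA
      exact (mul_eq_zero.1 hA.symm).resolve_left hP.ne'
    · intro h
      rw [h, mul_zero] at hA
      exact (mul_eq_zero.1 hA).resolve_right hvw
  have hB0 : B = 0 ↔ T = 0 := by
    constructor
    · intro h
      rw [h, zero_mul] at hB
      exact (mul_eq_zero.1 hB.symm).resolve_left hQ.ne'
    · intro h
      rw [h, mul_zero] at hB
      exact (mul_eq_zero.1 hB).resolve_right hvw
  have hApos : A * v * w > 0 ↔ 0 < S := by
    rw [mul_assoc, hA, gt_iff_lt, mul_pos_iff_of_pos_left hP]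
  have hBpos : B * v * w > 0 ↔ 0 < T := by
    rw [mul_assoc, hB, gt_iff_lt, mul_pos_iff_of_pos_left hQ]
  unfold JumpRule PosNode NegNode
  rw [hApos, hBpos, hneg, Ne, Ne, hA0, hB0, mul_neg_iff]
  rcases hp with ⟨h1, rfl⟩ | ⟨h1, rfl⟩ | ⟨h1, rfl⟩ <;>
  rcases hq with ⟨h2, rfl⟩ | ⟨h2, rfl⟩ | ⟨h2, rfl⟩ <;>
  grind

/-- The jump rule for angles `x_j` (the shifted angles at `n`) and `y_j` (the angles at `n+1`)
lying in common cells. -/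
lemma jumpRule_of_cells {x0 x1 y0 y1 C D r0 r1 : ℝ} (hC : 0 < C) (hD : 0 < D)
    (hr0 : 0 < r0) (hr1 : 0 < r1) (c0 : SameCell x0 y0) (c1 : SameCell x1 y1) :
    JumpRule ⌈(x1 - x0) / π⌉ ⌈(y1 - y0) / π⌉ (C * sin (x1 - x0)) (D * sin (y1 - y0))
      (r0 * sin y0) (r1 * sin y1) := by
  obtain ⟨k0, ⟨e0, f0⟩ | ⟨⟨e0, e0'⟩, f0, f0'⟩⟩ := c0 <;>
  obtain ⟨k1, ⟨e1, f1⟩ | ⟨⟨e1, e1'⟩, f1, f1'⟩⟩ := c1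
  · refine Or.inl ⟨by rw [e0, e1, f0, f1], ?_, ?_⟩
    · rintro ⟨h, -⟩
      rw [f0, sin_int_mul_pi] at h; simp at h
    · rintro ⟨h, -⟩
      rw [f0, sin_int_mul_pi] at h; simp at h
  · apply jumpRule_of_same_open (m := k1 - k0) hC hD <;> push_cast <;> linarith
  · apply jumpRule_of_same_open (m := k1 - k0 - 1) hC hD <;> push_cast <;> linarith
  · obtain ⟨ξ0, rfl⟩ : ∃ ξ, x0 = ξ + k0 * π := ⟨x0 - k0 * π, by ring⟩
    obtain ⟨ξ1, rfl⟩ : ∃ ξ, x1 = ξ + k1 * π := ⟨x1 - k1 * π, by ring⟩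
    obtain ⟨η0, rfl⟩ : ∃ η, y0 = η + k0 * π := ⟨y0 - k0 * π, by ring⟩
    obtain ⟨η1, rfl⟩ : ∃ η, y1 = η + k1 * π := ⟨y1 - k1 * π, by ring⟩
    have p0 : 0 < sin η0 := sin_pos_of_pos_of_lt_pi (by linarith) (by linarith)
    have p1 : 0 < sin η1 := sin_pos_of_pos_of_lt_pi (by linarith) (by linarith)
    have ex : ξ1 + k1 * π - (ξ0 + k0 * π) = (ξ1 - ξ0) + (k1 - k0 : ℤ) * π := by
      push_cast; ring
    have ey : η1 + k1 * π - (η0 + k0 * π) = (η1 - η0) + (k1 - k0 : ℤ) * π := by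
      push_cast; ring
    -- The sign of `sin y₀ * sin y₁` is `(-1) ^ (k₁ - k₀)`, cancelling that of the Wronskian.
    have hsgn : (-1 : ℝ) ^ (k1 - k0) * ((-1) ^ k0 * (-1) ^ k1) = 1 := by
      rw [← zpow_add₀ (by norm_num), ← zpow_add₀ (by norm_num)]
      exact Even.neg_one_zpow ⟨k1, by ring⟩
    rw [ex, ey]
    simp only [sin_add_int_mul_pi]
    refine jumpRule_of_signs (d := k1 - k0) (S := sin (ξ1 - ξ0)) (T := sin (η1 - η0)) ?_
      ⟨C * (r0 * r1 * sin η0 * sin η1), by positivity, ?_⟩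
      ⟨D * (r0 * r1 * sin η0 * sin η1), by positivity, ?_⟩ ?_ ?_
    · have := zpow_ne_zero k0 (by norm_num : (-1 : ℝ) ≠ 0)
      have := zpow_ne_zero k1 (by norm_num : (-1 : ℝ) ≠ 0)
      positivity
    · linear_combination (C * (r0 * r1 * sin η0 * sin η1) * sin (ξ1 - ξ0)) * hsgn
    · linear_combination (D * (r0 * r1 * sin η0 * sin η1) * sin (η1 - η0)) * hsgn
    · have := ceil_cases (σ := ξ1 - ξ0) (k1 - k0) (by linarith) (by linarith)
      tauto
    · have := ceil_cases (σ := η1 - η0) (k1 - k0) (by linarith) (by linarith)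
      tauto

/-- Weighted nodes of the Wronskian via Prüfer angles. -/
theorem stmt_15 (a0 b0 a1 b1 : ℤ → ℝ)
    (ha0 : ∀ n : ℤ, a0 n < 0) (ha1 : ∀ n : ℤ, a1 n < 0) (z : ℝ)
    (u0 ρ0 θ0 u1 ρ1 θ1 : ℤ → ℝ)
    (h0 : IsJSolution a0 b0 z u0) (hp0 : IsPrufer a0 u0 ρ0 θ0)
    (h1 : IsJSolution a1 b1 z u1) (hp1 : IsPrufer a1 u1 ρ1 θ1) (n : ℤ) :
    ((⌈(θ1 (n + 1) - θ0 (n + 1)) / π⌉ = ⌈(θ1 n - θ0 n) / π⌉ + 1) ↔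
      (jW a0 a1 u0 u1 (n + 1) * u0 (n + 1) * u1 (n + 1) > 0 ∧
        (jW a0 a1 u0 u1 n * jW a0 a1 u0 u1 (n + 1) < 0 ∨
          (jW a0 a1 u0 u1 n = 0 ∧ jW a0 a1 u0 u1 (n + 1) ≠ 0)))) ∧
    ((⌈(θ1 (n + 1) - θ0 (n + 1)) / π⌉ = ⌈(θ1 n - θ0 n) / π⌉ - 1) ↔
      (jW a0 a1 u0 u1 n * u0 (n + 1) * u1 (n + 1) > 0 ∧
        (jW a0 a1 u0 u1 n * jW a0 a1 u0 u1 (n + 1) < 0 ∨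
          (jW a0 a1 u0 u1 n ≠ 0 ∧ jW a0 a1 u0 u1 (n + 1) = 0)))) ∧
    jSgn a0 a1 u0 u1 n = ⌈(θ1 (n + 1) - θ0 (n + 1)) / π⌉ - ⌈(θ1 n - θ0 n) / π⌉ := by
  have key : JumpRule ⌈(θ1 n - θ0 n) / π⌉ ⌈(θ1 (n + 1) - θ0 (n + 1)) / π⌉
      (jW a0 a1 u0 u1 n) (jW a0 a1 u0 u1 (n + 1)) (u0 (n + 1)) (u1 (n + 1)) := by
    have r0 := (hp0 n).1
    have r1 := (hp1 n).1
    obtain ⟨r0', s0, -⟩ := hp0 (n + 1)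
    obtain ⟨r1', s1, -⟩ := hp1 (n + 1)
    rw [jW_eq_sin hp0 hp1, jW_eq_sin hp0 hp1, s0, s1]
    have := jumpRule_of_cells (mul_pos r0 r1) (mul_pos r0' r1') r0' r1'
      (prufer_cell ha0 h0 hp0 n) (prufer_cell ha1 h1 hp1 n)
    rwa [add_sub_add_right_eq_sub] at this
  change (_ ↔ PosNode _ _ _ _) ∧ (_ ↔ NegNode _ _ _ _) ∧ _
  have hs : jSgn a0 a1 u0 u1 n =
      open Classical in
      if PosNode (jW a0 a1 u0 u1 n) (jW a0 a1 u0 u1 (n + 1)) (u0 (n + 1)) (u1 (n + 1)) then 1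
      else if NegNode (jW a0 a1 u0 u1 n) (jW a0 a1 u0 u1 (n + 1)) (u0 (n + 1)) (u1 (n + 1))
      then -1 else 0 := by
    unfold jSgn PosNode NegNode
    congr
  rw [hs]
  rcases key with ⟨h, hP, hN⟩ | ⟨h, hP, hN⟩ | ⟨h, hP, hN⟩ <;>
    grind
end
end

section
/- Weighted node counts via Prüfer angle differences: Let u_0, u_1 be solutions of τ_0 u = zu and τ_1 u = zu respectively, with Prüfer angles θ_0, θ_1, and set Δ(n) = θ_1(n) − θ_0(n). Then for all integers m < n: #_{[m,n]}(u_0,u_1) = ⌈Δ(n)/π⌉ − ⌈Δ(m)/π⌉, #_{(m,n]}(u_0,u_1) = ⌈Δ(n)/π⌉ − ⌊Δ(m)/π⌋ − 1, #_{[m,n)}(u_0,u_1) = ⌊Δ(n)/π⌋ − ⌈Δ(m)/π⌉ + 1, and #_{(m,n)}(u_0,u_1) = ⌊Δ(n)/π⌋ − ⌊Δ(m)/π⌋. -/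
/-!
In Prüfer variables the Wronskian is `W_n = ρ₀(n) ρ₁(n) sin Δ(n)` (`jW_eq_sin_sub`), so its sign
records the position of `Δ(n) = θ₁(n) - θ₀(n)` among the multiples of `π`.

Since `-a(n) u(n+1)` equals both `ρ(n) cos θ(n) = ρ(n) sin (θ(n) + π/2)` and a positive multiple of
`sin θ(n+1)`, the angles `θ(n) + π/2` and `θ(n+1)` lie in the same open interval between consecutive
multiples of `π`, or are the same multiple of `π` (`prufer_step`). The shift `π/2` cancels in `Δ`.
Hence if `u₀(n+1) u₁(n+1) = 0`, then `⌈Δ(n)/π⌉ = ⌈Δ(n+1)/π⌉` and `#_n = 0`; otherwise `Δ(n)` and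
`Δ(n+1)` are both within `π` of one multiple `lπ`, the product `u₀(n+1) u₁(n+1)` has the sign
`(-1)^l`, and comparing signs shows that `#_n` counts the signed crossings of `lπ`. In all cases
`#_n = ⌈Δ(n+1)/π⌉ - ⌈Δ(n)/π⌉` (`jSgn_eq`). Telescoping gives the count on `[m,n]`, and since `W_n = 0`
exactly when `Δ(n) ∈ πℤ`, the endpoint corrections exchange ceilings for floors
(`floor_eq_ceil_sub`).
-/

open Real

noncomputable section

/-- The Wronskian in Prüfer variables: `W_n = ρ₀(n)ρ₁(n) sin (θ₁(n) - θ₀(n))`. -/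
lemma jW_eq_sin_sub {a0 a1 u0 ρ0 θ0 u1 ρ1 θ1 : ℤ → ℝ}
    (hp0 : IsPrufer a0 u0 ρ0 θ0) (hp1 : IsPrufer a1 u1 ρ1 θ1) (n : ℤ) :
    jW a0 a1 u0 u1 n = ρ0 n * ρ1 n * sin (θ1 n - θ0 n) := by
  obtain ⟨-, hs0, hc0, -⟩ := hp0 n
  obtain ⟨-, hs1, hc1, -⟩ := hp1 n
  rw [sin_sub, jW]
  linear_combination (-u0 n) * hc1 + u1 n * hc0 - ρ1 n * cos (θ1 n) * hs0
    + ρ0 n * cos (θ0 n) * hs1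

lemma neg_one_zpow_eq_or (l : ℤ) : ((-1 : ℝ) ^ l = 1) ∨ ((-1 : ℝ) ^ l = -1) := by
  rcases Int.even_or_odd l with h | h
  · exact Or.inl h.neg_one_zpow
  · exact Or.inr h.neg_one_zpow

/-- The one-step behaviour of a Prüfer angle: `θ(n) + π/2` and `θ(n+1)` either are the same multiple
of `π`, or lie in the same open interval between consecutive multiples of `π`. The difference
equation is needed only when `u(n+1) = 0`: then `u(n+2)` and `u(n)` have opposite signs, which fixes
the multiple. -/
lemma prufer_step {a b u ρ θ : ℤ → ℝ} {z : ℝ} (ha : ∀ n : ℤ, a n < 0)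
    (h : IsJSolution a b z u) (hp : IsPrufer a u ρ θ) (n : ℤ) :
    ∃ k : ℤ, (θ n + π / 2 = k * π ∧ θ (n + 1) = k * π) ∨
      ((k * π < θ n + π / 2 ∧ θ n + π / 2 < (k + 1) * π) ∧
        (k * π < θ (n + 1) ∧ θ (n + 1) < (k + 1) * π)) := by
  have hpi := Real.pi_pos
  obtain ⟨hρ, hs, hc, hle, hge⟩ := hp n
  obtain ⟨hρ', hs', hc', -, -⟩ := hp (n + 1)
  have hrec := h.2 (n + 1)
  rw [jTau, add_sub_cancel_right] at hrec
  obtain ⟨c, hcdef⟩ : ∃ c, ⌈θ n / π⌉ = c + 1 := ⟨⌈θ n / π⌉ - 1, by ring⟩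
  rw [hcdef] at hle hge
  have h1 := Int.ceil_eq_iff.1 hcdef
  have h2 : (c : ℝ) < θ (n + 1) / π := by
    apply Int.lt_ceil.1; omega
  have h3 : θ (n + 1) / π ≤ (c + 1 + 1 : ℤ) := Int.ceil_le.1 hge
  push_cast at h1 h3
  rw [lt_div_iff₀ hpi, div_le_iff₀ hpi] at h1
  rw [lt_div_iff₀ hpi] at h2
  rw [div_le_iff₀ hpi] at h3
  -- translate both angles by `-cπ`, into `(0, π]` and `(0, 2π]`
  obtain ⟨β, hβ⟩ : ∃ β, β = θ n - c * π := ⟨_, rfl⟩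
  obtain ⟨γ, hγ⟩ : ∃ γ, γ = θ (n + 1) - c * π := ⟨_, rfl⟩
  have hsβ := sin_sub_int_mul_pi (θ n) c
  have hcβ := cos_sub_int_mul_pi (θ n) c
  have hsγ := sin_sub_int_mul_pi (θ (n + 1)) c
  have hcγ := cos_sub_int_mul_pi (θ (n + 1)) c
  rw [← hβ] at hsβ hcβ
  rw [← hγ] at hsγ hcγ
  have e1 : -(a n) * ρ (n + 1) * sin γ = ρ n * cos β := by
    rw [hsγ, hcβ]
    linear_combination ((-1 : ℝ) ^ c) * hc + (-1 : ℝ) ^ c * a n * hs'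
  have hpos : 0 < -(a n) * ρ (n + 1) := mul_pos (neg_pos.2 (ha n)) hρ'
  have hβ0 : 0 < β := by linarith [h1.1]
  have hβ1 : β ≤ π := by linarith [h1.2]
  have hγ0 : 0 < γ := by linarith
  have hγ1 : γ ≤ 2 * π := by linarith
  have hsin_pos : γ < π → 0 < sin γ := fun hh => sin_pos_of_pos_of_lt_pi hγ0 hh
  have hsin_nonpos : π ≤ γ → sin γ ≤ 0 := fun hh => by
    have := sin_nonneg_of_nonneg_of_le_pi (x := γ - π) (by linarith) (by linarith)
    rw [sin_sub_pi] at this; linarith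
  rcases lt_trichotomy β (π / 2) with hlt | heq | hgt
  · have hcos : 0 < cos β := cos_pos_of_mem_Ioo ⟨by linarith, hlt⟩
    have hsin : 0 < sin γ := by
      have : 0 < -(a n) * ρ (n + 1) * sin γ := e1 ▸ mul_pos hρ hcos
      exact (mul_pos_iff_of_pos_left hpos).1 this
    have : γ < π := by
      by_contra! hh
      linarith [hsin_nonpos hh]
    exact ⟨c, Or.inr ⟨⟨by linarith, by linarith⟩, by linarith, by linarith⟩⟩
  · have hcos : cos β = 0 := by rw [heq, cos_pi_div_two]
    have hsin : sin γ = 0 := by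
      rw [hcos, mul_zero] at e1
      exact (mul_eq_zero.1 e1).resolve_left hpos.ne'
    have hγπ : π ≤ γ := by
      by_contra! hh
      linarith [hsin_pos hh]
    have hu : u (n + 1) = 0 := by
      have : (-1 : ℝ) ^ c ≠ 0 := by positivity
      have h0 : sin (θ (n + 1)) = 0 := by
        rw [hsγ] at hsin
        exact (mul_eq_zero.1 hsin).resolve_left this
      rw [hs', h0, mul_zero]
    have e2 : ρ (n + 1) * cos γ = a n * ρ n := by
      have hsin1 : sin β = 1 := by rw [heq, sin_pi_div_two]
      rw [hsβ] at hsin1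
      rw [hcγ]
      rw [hu] at hrec
      linear_combination (-(-1 : ℝ) ^ c) * hc' - (-1 : ℝ) ^ c * hrec + (-1 : ℝ) ^ c * a n * hs
        + a n * ρ n * hsin1
    have hcosneg : cos γ < 0 := by
      have : ρ (n + 1) * cos γ < 0 := e2 ▸ mul_neg_of_neg_of_pos (ha n) hρ
      by_contra! hh
      linarith [mul_nonneg hρ'.le hh]
    have hγeq : γ = π := by
      by_contra hne
      have hgt : π < γ := lt_of_le_of_ne hγπ (Ne.symm hne)
      rcases hγ1.lt_or_eq with hh | hh
      · have := sin_pos_of_pos_of_lt_pi (x := γ - π) (by linarith) (by linarith)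
        rw [sin_sub_pi] at this; linarith
      · rw [hh, cos_two_pi] at hcosneg; linarith
    refine ⟨c + 1, Or.inl ⟨?_, ?_⟩⟩ <;> push_cast <;> linarith
  · have hcos : cos β < 0 := cos_neg_of_pi_div_two_lt_of_lt hgt (by linarith)
    have hsin : sin γ < 0 := by
      have : -(a n) * ρ (n + 1) * sin γ < 0 := e1 ▸ mul_neg_of_pos_of_neg hρ hcos
      by_contra! hh
      linarith [mul_nonneg hpos.le hh]
    have hg1 : π < γ := by
      by_contra! hh
      linarith [sin_nonneg_of_nonneg_of_le_pi hγ0.le hh]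
    have hg2 : γ < 2 * π := lt_of_le_of_ne hγ1 (fun hh => by
      rw [hh, sin_two_pi] at hsin; linarith)
    refine ⟨c + 1, Or.inr ⟨⟨?_, ?_⟩, ?_, ?_⟩⟩ <;> push_cast <;> linarith

/-- For `d` within `π` of `lπ`, the number `(-1)^l sin d` has the sign of `d - lπ`, and `⌈d/π⌉` is
`l + 1` or `l` according to whether that sign is positive or not. -/
lemma sign_ceil_near {d : ℝ} {l : ℤ} (hl : (l - 1) * π < d) (hr : d < (l + 1) * π) :
    (0 < (-1 : ℝ) ^ l * sin d ∧ ⌈d / π⌉ = l + 1) ∨ (sin d = 0 ∧ ⌈d / π⌉ = l) ∨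
      ((-1 : ℝ) ^ l * sin d < 0 ∧ ⌈d / π⌉ = l) := by
  have hpi := Real.pi_pos
  rw [← sin_sub_int_mul_pi]
  rcases lt_trichotomy d (l * π) with h | h | h
  · refine Or.inr (Or.inr ⟨sin_neg_of_neg_of_neg_pi_lt (by linarith) (by linarith), ?_⟩)
    rw [Int.ceil_eq_iff, lt_div_iff₀ hpi, div_le_iff₀ hpi]
    exact ⟨hl, h.le⟩
  · refine Or.inr (Or.inl ⟨by rw [h, sin_int_mul_pi], ?_⟩)
    rw [h, mul_div_cancel_right₀ _ hpi.ne', Int.ceil_intCast]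
  · refine Or.inl ⟨sin_pos_of_pos_of_lt_pi (by linarith) (by linarith), ?_⟩
    rw [Int.ceil_eq_iff, lt_div_iff₀ hpi, div_le_iff₀ hpi]
    push_cast
    exact ⟨by linarith, hr.le⟩

lemma ceil_div_pi_of_mem {d : ℝ} {l : ℤ} (hl : l * π < d) (hr : d < (l + 1) * π) :
    ⌈d / π⌉ = l + 1 := by
  have hpi := Real.pi_pos
  rw [Int.ceil_eq_iff, lt_div_iff₀ hpi, div_le_iff₀ hpi]
  push_cast
  exact ⟨by linarith, hr.le⟩

lemma jSgn_of_prod_eq_zero {a0 a1 u0 u1 : ℤ → ℝ} {n : ℤ} (h : u0 (n + 1) * u1 (n + 1) = 0) :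
    jSgn a0 a1 u0 u1 n = 0 := by
  simp only [jSgn, mul_assoc, h, mul_zero, gt_iff_lt, lt_irrefl, false_and, if_false]

/-- The identity `#_{[m,n]} = ⌈Δ(n)/π⌉ - ⌈Δ(m)/π⌉` for one step, `n = m + 1`. -/
lemma jSgn_eq {a0 b0 a1 b1 : ℤ → ℝ}
    (ha0 : ∀ n : ℤ, a0 n < 0) (ha1 : ∀ n : ℤ, a1 n < 0) {z : ℝ}
    {u0 ρ0 θ0 u1 ρ1 θ1 : ℤ → ℝ}
    (h0 : IsJSolution a0 b0 z u0) (hp0 : IsPrufer a0 u0 ρ0 θ0)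
    (h1 : IsJSolution a1 b1 z u1) (hp1 : IsPrufer a1 u1 ρ1 θ1) (n : ℤ) :
    jSgn a0 a1 u0 u1 n
      = ⌈(θ1 (n + 1) - θ0 (n + 1)) / π⌉ - ⌈(θ1 n - θ0 n) / π⌉ := by
  have hu0 := (hp0 (n + 1)).2.1
  have hu1 := (hp1 (n + 1)).2.1
  obtain ⟨k0, ⟨hA0, hB0⟩ | ⟨⟨hA0, hA0'⟩, hB0, hB0'⟩⟩ := prufer_step ha0 h0 hp0 n
  · -- `u₀(n+1) = 0`: `Δ(n)` and `Δ(n+1)` are equal or lie in the same open interval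
    rw [jSgn_of_prod_eq_zero (by rw [hu0, hB0, sin_int_mul_pi]; ring)]
    obtain ⟨k1, ⟨hA1, hB1⟩ | ⟨⟨hA1, hA1'⟩, hB1, hB1'⟩⟩ := prufer_step ha1 h1 hp1 n
    · rw [show θ1 (n + 1) - θ0 (n + 1) = θ1 n - θ0 n by linarith, sub_self]
    · rw [ceil_div_pi_of_mem (d := θ1 n - θ0 n) (l := k1 - k0) (by push_cast; linarith)
        (by push_cast; linarith), ceil_div_pi_of_mem (l := k1 - k0) (by push_cast; linarith)
        (by push_cast; linarith), sub_self]
  · obtain ⟨k1, ⟨hA1, hB1⟩ | ⟨⟨hA1, hA1'⟩, hB1, hB1'⟩⟩ := prufer_step ha1 h1 hp1 n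
    · rw [jSgn_of_prod_eq_zero (by rw [hu1, hB1, sin_int_mul_pi]; ring)]
      rw [ceil_div_pi_of_mem (d := θ1 n - θ0 n) (l := k1 - k0 - 1) (by push_cast; linarith)
        (by push_cast; linarith), ceil_div_pi_of_mem (l := k1 - k0 - 1) (by push_cast; linarith)
        (by push_cast; linarith), sub_self]
    · -- both values of `Δ` are within `π` of `(k₁ - k₀)π`, and `u₀(n+1)u₁(n+1)` has the sign
      -- `(-1)^(k₁ - k₀)`
      have hs0 : 0 < (-1 : ℝ) ^ k0 * u0 (n + 1) := by
        have := sin_pos_of_pos_of_lt_pi (x := θ0 (n + 1) - k0 * π) (by linarith) (by linarith)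
        rw [sin_sub_int_mul_pi] at this
        rw [hu0, mul_left_comm]
        exact mul_pos (hp0 (n + 1)).1 this
      have hs1 : 0 < (-1 : ℝ) ^ k1 * u1 (n + 1) := by
        have := sin_pos_of_pos_of_lt_pi (x := θ1 (n + 1) - k1 * π) (by linarith) (by linarith)
        rw [sin_sub_int_mul_pi] at this
        rw [hu1, mul_left_comm]
        exact mul_pos (hp1 (n + 1)).1 this
      have hsl : ((-1 : ℝ) ^ (k1 - k0)) = (-1) ^ k0 * (-1) ^ k1 := by
        rw [zpow_sub₀ (by norm_num)]
        rcases neg_one_zpow_eq_or k0 with h | h <;> rw [h] <;> ring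
      have hp : 0 < (-1 : ℝ) ^ (k1 - k0) * (u0 (n + 1) * u1 (n + 1)) := by
        rw [hsl]
        calc 0 < _ := mul_pos hs0 hs1
          _ = _ := by ring
      have hW := jW_eq_sin_sub hp0 hp1 n
      have hW' := jW_eq_sin_sub hp0 hp1 (n + 1)
      have hρ : 0 < ρ0 n * ρ1 n := mul_pos (hp0 n).1 (hp1 n).1
      have hρ' : 0 < ρ0 (n + 1) * ρ1 (n + 1) := mul_pos (hp0 (n + 1)).1 (hp1 (n + 1)).1
      have c1 := sign_ceil_near (d := θ1 n - θ0 n) (l := k1 - k0) (by push_cast; linarith)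
        (by push_cast; linarith)
      have c2 := sign_ceil_near (d := θ1 (n + 1) - θ0 (n + 1)) (l := k1 - k0)
        (by push_cast; linarith) (by push_cast; linarith)
      unfold jSgn
      rw [hW, hW']
      simp only [mul_assoc _ (u0 (n + 1))]
      generalize u0 (n + 1) * u1 (n + 1) = p at *
      generalize sin (θ1 n - θ0 n) = w at *
      generalize sin (θ1 (n + 1) - θ0 (n + 1)) = w' at *
      generalize ρ0 n * ρ1 n = r at *
      generalize ρ0 (n + 1) * ρ1 (n + 1) = r' at *
      have hss : (-1 : ℝ) ^ (k1 - k0) * (-1 : ℝ) ^ (k1 - k0) = 1 := by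
        rcases neg_one_zpow_eq_or (k1 - k0) with h | h <;> rw [h] <;> norm_num
      generalize k1 - k0 = l at *
      generalize (-1 : ℝ) ^ l = s at *
      -- positive factors drop out, and both Wronskians can be multiplied by the sign `s`
      have hA : ∀ {q y : ℝ}, 0 < q → (q * y * p > 0 ↔ 0 < s * y) := fun {q y} hq => by
        rw [gt_iff_lt, show q * y * p = q * (s * p) * (s * y) by
          linear_combination (-q * y * p) * hss]
        exact mul_pos_iff_of_pos_left (mul_pos hq hp)
      have hC : r * w * (r' * w') < 0 ↔ (s * w) * (s * w') < 0 := by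
        rw [show r * w * (r' * w') = (r * r') * ((s * w) * (s * w')) by
          linear_combination (-r * w * r' * w') * hss]
        rw [← neg_pos, ← mul_neg, mul_pos_iff_of_pos_left (mul_pos hρ hρ'), neg_pos]
      have hs : s ≠ 0 := left_ne_zero_of_mul_eq_one hss
      have hD : ∀ {q y : ℝ}, 0 < q → (q * y = 0 ↔ s * y = 0) := fun {q y} hq => by
        simp [hq.ne', hs]
      have hZ : ∀ {y : ℝ}, y = 0 ↔ s * y = 0 := by simp [hs]
      rw [hZ] at c1 c2
      simp only [ne_eq, hA hρ, hA hρ', hC, hD hρ, hD hρ']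
      generalize s * w = x at *
      generalize s * w' = x' at *
      simp only [mul_neg_iff]
      rcases c1 with ⟨hx, e⟩ | ⟨hx, e⟩ | ⟨hx, e⟩ <;>
      rcases c2 with ⟨hx', e'⟩ | ⟨hx', e'⟩ | ⟨hx', e'⟩ <;>
      rw [e, e'] <;>
      clear * - hx hx' <;>
      grind

lemma cntCC_eq {a0 b0 a1 b1 : ℤ → ℝ}
    (ha0 : ∀ n : ℤ, a0 n < 0) (ha1 : ∀ n : ℤ, a1 n < 0) {z : ℝ}
    {u0 ρ0 θ0 u1 ρ1 θ1 : ℤ → ℝ}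
    (h0 : IsJSolution a0 b0 z u0) (hp0 : IsPrufer a0 u0 ρ0 θ0)
    (h1 : IsJSolution a1 b1 z u1) (hp1 : IsPrufer a1 u1 ρ1 θ1) {m n : ℤ} (hmn : m ≤ n) :
    cntCC a0 a1 u0 u1 m n = ⌈(θ1 n - θ0 n) / π⌉ - ⌈(θ1 m - θ0 m) / π⌉ := by
  induction n, hmn using Int.leInduction with
  | base => simp [cntCC]
  | succ n hmn ih =>
    rw [cntCC] at ih ⊢
    have : Finset.Ico m (n + 1) = insert n (Finset.Ico m n) := by
      ext x; simp only [Finset.mem_Ico, Finset.mem_insert]; omega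
    rw [this, Finset.sum_insert (by simp), ih, jSgn_eq ha0 ha1 h0 hp0 h1 hp1]
    ring

open Classical in
/-- The correction at an endpoint turns ceilings into floors: the Wronskian vanishes exactly when
`Δ(n)` is a multiple of `π`. -/
lemma floor_eq_ceil_sub {a0 a1 u0 ρ0 θ0 u1 ρ1 θ1 : ℤ → ℝ}
    (hp0 : IsPrufer a0 u0 ρ0 θ0) (hp1 : IsPrufer a1 u1 ρ1 θ1) (n : ℤ) :
    ⌊(θ1 n - θ0 n) / π⌋
      = ⌈(θ1 n - θ0 n) / π⌉ - 1 + if jW a0 a1 u0 u1 n = 0 then 1 else 0 := by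
  have hpi := Real.pi_pos
  have hρ : 0 < ρ0 n * ρ1 n := mul_pos (hp0 n).1 (hp1 n).1
  rw [jW_eq_sin_sub hp0 hp1 n]
  split_ifs with h
  · obtain ⟨k, hk⟩ := sin_eq_zero_iff.1 ((mul_eq_zero.1 h).resolve_left hρ.ne')
    rw [← hk, mul_div_cancel_right₀ _ hpi.ne', Int.ceil_intCast, Int.floor_intCast]
    ring
  · have hne : ((⌈(θ1 n - θ0 n) / π⌉ : ℤ) : ℝ) ≠ (θ1 n - θ0 n) / π := by
      intro hh
      refine h (mul_eq_zero_of_right _ (sin_eq_zero_iff.2 ⟨⌈(θ1 n - θ0 n) / π⌉, ?_⟩))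
      rw [hh, div_mul_cancel₀ _ hpi.ne']
    obtain ⟨l1, l2⟩ := Int.ceil_eq_iff.1 (rfl : ⌈(θ1 n - θ0 n) / π⌉ = _)
    rw [Int.floor_eq_iff]
    push_cast
    exact ⟨by linarith, by linarith [lt_of_le_of_ne l2 hne.symm]⟩

/-- Weighted node counts of the Wronskian via Prüfer angle differences. -/
theorem stmt_16 (a0 b0 a1 b1 : ℤ → ℝ)
    (ha0 : ∀ n : ℤ, a0 n < 0) (ha1 : ∀ n : ℤ, a1 n < 0) (z : ℝ)
    (u0 ρ0 θ0 u1 ρ1 θ1 : ℤ → ℝ)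
    (h0 : IsJSolution a0 b0 z u0) (hp0 : IsPrufer a0 u0 ρ0 θ0)
    (h1 : IsJSolution a1 b1 z u1) (hp1 : IsPrufer a1 u1 ρ1 θ1)
    (m n : ℤ) (hmn : m < n) :
    cntCC a0 a1 u0 u1 m n = ⌈(θ1 n - θ0 n) / π⌉ - ⌈(θ1 m - θ0 m) / π⌉ ∧
    cntOC a0 a1 u0 u1 m n = ⌈(θ1 n - θ0 n) / π⌉ - ⌊(θ1 m - θ0 m) / π⌋ - 1 ∧
    cntCO a0 a1 u0 u1 m n = ⌊(θ1 n - θ0 n) / π⌋ - ⌈(θ1 m - θ0 m) / π⌉ + 1 ∧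
    cntOO a0 a1 u0 u1 m n = ⌊(θ1 n - θ0 n) / π⌋ - ⌊(θ1 m - θ0 m) / π⌋ := by
  have hcc := cntCC_eq ha0 ha1 h0 hp0 h1 hp1 hmn.le
  have hm := floor_eq_ceil_sub hp0 hp1 m
  have hn := floor_eq_ceil_sub hp0 hp1 n
  refine ⟨hcc, ?_, ?_, ?_⟩ <;> simp only [cntOC, cntCO, cntOO, hcc, hm, hn] <;> ring
end
end
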